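/- arXiv:math/0609634 — 3 statements merged into one kernel-verified Lean document; each statement's English description precedes it below -/
import Mathlib

section
/- For every natural number k there exists an abelian group G such that: the cardinality of G equals ℶ_{k+1}; G is ℵ_{k+1}-free; and the only group homomorphism from G to the additive group of integers ℤ is the zero homomorphism (i.e. Hom(G, ℤ) = {0}). -/
open Cardinal

/-!
This is Shelah's construction of `ℵ_{k+1}`-free groups, over a product of `k + 1` trees. The group
is generated by the finite sequences `s` of truncated branches together with, for every `s` and
every branch `η`, the elements needed to make sense of the 2-adic sum
`∑ n, 2 ^ n (a η n s + ∑ m, (truncate m n η :: s))`.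

Freeness: `ℵ_j` branches can be ranked, by induction on `j < k + 1`, so that each of them has a
truncation shared only with branches of larger rank. For a set of at most `ℵ_k` relations, these
truncations serve as pivots and make a generating set triangular, hence a basis.

Trivial dual: the trees are so wide that a branch can code, entry by entry, functions of its
preceding coordinates. Hence for every homomorphism `f` and every `s` some branch `η` predicts the
values `∑ m, f (truncate m n η :: s)` for all `n`. If `f s ≠ 0`, then `f` maps the sum above to an
integer that is congruent to the partial sums of `∑ n, 2 ^ n (a η n (f s) + prediction n)` modulo
all powers of 2. There are only countably many pairs of integers but uncountably many 2-adic ones,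
so the digits `a η` can be chosen beforehand such that this never happens.
-/

universe u v

section FreeModules

variable {R : Type*} [CommRing R]

theorem linearIndependent_of_triangular [IsDomain R] {ι M N W : Type*} [Preorder W] [AddCommGroup M]
    [Module R M] [AddCommGroup N] [Module R N] [Module.IsTorsionFree R N] {f : ι → M}
    (φ : ι → M →ₗ[R] N) (rank : ι → W) (hdiag : ∀ i, φ i (f i) ≠ 0)
    (htri : ∀ i j, φ j (f i) ≠ 0 → i = j ∨ rank j < rank i) : LinearIndependent R f := by
  rw [linearIndependent_iff]
  intro l hl
  by_contra hne
  obtain ⟨j, hj, hmax⟩ :=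
    l.support.finite_toSet.exists_maximalFor rank _ (Finsupp.support_nonempty_iff.2 hne)
  have hoff : ∀ i ∈ l.support, i ≠ j → φ j (l i • f i) = 0 := by
    intro i hi hij
    by_contra hφ
    obtain rfl | hlt := htri i j fun h ↦ hφ (by rw [map_smul, h, smul_zero])
    · exact hij rfl
    · exact hlt.not_ge (hmax hi hlt.le)
  have hsum : l j • φ j (f j) = 0 := by
    rw [← map_smul, ← Finset.sum_eq_single_of_mem j hj hoff, ← map_sum]
    exact (congrArg (φ j) hl).trans (map_zero _)
  exact (smul_eq_zero.1 hsum).elim (Finsupp.mem_support_iff.1 hj) (hdiag j)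

theorem exists_mem_support_mem_supported_Iic {I : Type*} [LinearOrder I] {z : I →₀ R}
    (hz : z ≠ 0) : ∃ j ∈ z.support, z ∈ Finsupp.supported R R (Set.Iic j) := by
  have hsupp := Finsupp.support_nonempty_iff.2 hz
  exact ⟨z.support.max' hsupp, z.support.max'_mem hsupp, fun t ht ↦ z.support.le_max' t ht⟩

theorem exists_mem_forall_leadingCoeff_dvd [IsPrincipalIdealRing R] {I : Type*} [Preorder I]
    (N : Submodule R (I →₀ R)) (i : I) : ∃ x ∈ N ⊓ Finsupp.supported R R (Set.Iic i),
      ∀ z ∈ N ⊓ Finsupp.supported R R (Set.Iic i), x i ∣ z i := by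
  let J : Ideal R := (N ⊓ Finsupp.supported R R (Set.Iic i)).map (Finsupp.lapply i)
  obtain ⟨x, hx, hxJ⟩ : Submodule.IsPrincipal.generator J ∈ J :=
    Submodule.IsPrincipal.generator_mem J
  refine ⟨x, hx, fun z hz ↦ ?_⟩
  rw [show x i = _ from hxJ, ← Submodule.IsPrincipal.mem_iff_generator_dvd]
  exact ⟨z, hz, rfl⟩

theorem le_span_of_leadingCoeff_dvd {I : Type*} [LinearOrder I] [WellFoundedLT I]
    {N : Submodule R (I →₀ R)} {x : I → I →₀ R}
    (hx : ∀ i, x i ∈ N ⊓ Finsupp.supported R R (Set.Iic i))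
    (hdvd : ∀ i, ∀ z ∈ N ⊓ Finsupp.supported R R (Set.Iic i), x i i ∣ z i) :
    N ≤ Submodule.span R (x '' {i | x i i ≠ 0}) := by
  have hIic : ∀ i, N ⊓ Finsupp.supported R R (Set.Iic i) ≤
      Submodule.span R (x '' {i | x i i ≠ 0}) := by
    intro i
    induction i using WellFoundedLT.induction with
    | ind i ih =>
      have of_apply_eq_zero : ∀ z ∈ N ⊓ Finsupp.supported R R (Set.Iic i), z i = 0 →
          z ∈ Submodule.span R (x '' {i | x i i ≠ 0}) := by
        intro z hz hzi
        obtain rfl | hz0 := eq_or_ne z 0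
        · exact Submodule.zero_mem _
        obtain ⟨j, hj, hzj⟩ := exists_mem_support_mem_supported_Iic hz0
        have hji : j ≠ i := by
          rintro rfl
          exact Finsupp.mem_support_iff.1 hj hzi
        exact ih j (lt_of_le_of_ne (hz.2 hj) hji) ⟨hz.1, hzj⟩
      intro z hz
      by_cases hxi : x i i = 0
      · exact of_apply_eq_zero z hz (zero_dvd_iff.1 (hxi ▸ hdvd i z hz))
      obtain ⟨a, ha⟩ := hdvd i z hz
      rw [← sub_add_cancel z (a • x i)]
      refine Submodule.add_mem _ (of_apply_eq_zero _ ?_ ?_)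
        (Submodule.smul_mem _ _ (Submodule.subset_span ⟨i, hxi, rfl⟩))
      · exact Submodule.sub_mem _ hz (Submodule.smul_mem _ _ (hx i))
      · simp [ha, mul_comm]
  intro z hz
  obtain rfl | hz0 := eq_or_ne z 0
  · exact Submodule.zero_mem _
  obtain ⟨j, -, hzj⟩ := exists_mem_support_mem_supported_Iic hz0
  exact hIic j ⟨hz, hzj⟩

variable [IsDomain R] [IsPrincipalIdealRing R]

theorem free_submodule_finsupp {I : Type*} (N : Submodule R (I →₀ R)) : Module.Free R N := by
  obtain ⟨_, _⟩ := exists_wellFoundedLT I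
  choose x hx hdvd using exists_mem_forall_leadingCoeff_dvd N
  have hspan : Submodule.span R (x '' {i | x i i ≠ 0}) = N :=
    le_antisymm (Submodule.span_le.2 (by rintro _ ⟨i, -, rfl⟩; exact (hx i).1))
      (le_span_of_leadingCoeff_dvd hx hdvd)
  have hli : LinearIndependent R fun i : {i | x i i ≠ 0} ↦ x i := by
    refine linearIndependent_of_triangular (fun j ↦ Finsupp.lapply j.1) Subtype.val
      (fun j ↦ j.2) fun i j hij ↦ ?_
    have hji : j.1 ≤ i.1 := (hx i).2 (Finsupp.mem_support_iff.2 hij)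
    exact hji.eq_or_lt.imp_left fun h ↦ Subtype.ext h.symm
  rw [← hspan, Set.image_eq_range]
  exact Module.Free.of_basis (Module.Basis.span hli)

theorem free_of_injective {M N : Type*} [AddCommGroup M] [Module R M] [AddCommGroup N]
    [Module R N] [Module.Free R N] (g : M →ₗ[R] N) (hg : Function.Injective g) :
    Module.Free R M := by
  let b := Module.Free.chooseBasis R N
  have := free_submodule_finsupp (LinearMap.range (b.repr.toLinearMap ∘ₗ g))
  exact Module.Free.of_equiv
    (LinearEquiv.ofInjective (b.repr.toLinearMap ∘ₗ g) (b.repr.injective.comp hg)).symm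

end FreeModules

section PadicDigits

variable (p : ℕ) [Fact p.Prime]

theorem uncountable_padicInt : Uncountable ℤ_[p] := by
  have hball : IsOpen {x : ℚ_[p] | ‖x‖ ≤ 1} := by
    simpa only [Metric.closedBall, dist_zero_right] using
      IsUltrametricDist.isOpen_closedBall (0 : ℚ_[p]) one_ne_zero
  rw [← aleph0_lt_mk_iff]
  have hzero : (0 : ℚ_[p]) ∈ {x : ℚ_[p] | ‖x‖ ≤ 1} := norm_zero.trans_le zero_le_one
  exact aleph0_lt_continuum.trans_le (continuum_le_cardinal_of_isOpen ℚ_[p] hball ⟨0, hzero⟩)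

variable {p} in
theorem exists_digits (x : ℤ_[p]) : ∃ a : ℕ → ℤ, ∀ n,
    PadicInt.toZModPow n x = ((∑ i ∈ Finset.range n, (p : ℤ) ^ i * a i : ℤ) : ZMod (p ^ n)) := by
  have hdvd : ∀ i, (p : ℤ) ^ i ∣ (x.appr (i + 1) : ℤ) - x.appr i := by
    intro i
    have := PadicInt.dvd_appr_sub_appr x i (i + 1) i.le_succ
    rw [← Nat.cast_sub (x.appr_mono i.le_succ)]
    exact_mod_cast this
  choose a ha using hdvd
  refine ⟨a, fun n ↦ ?_⟩
  simp_rw [← ha]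
  rw [Finset.sum_range_sub (fun i ↦ (x.appr i : ℤ))]
  rw [PadicInt.appr, Nat.cast_zero, sub_zero, Int.cast_natCast]
  rfl

theorem exists_digits_forall_not_dvd (c : ℕ → ℤ) : ∃ a : ℕ → ℤ,
    ∀ z b : ℤ, z ≠ 0 →
      ¬ ∀ n, (p : ℤ) ^ n ∣ b - ∑ i ∈ Finset.range n, (p : ℤ) ^ i * (a i * z + c i) := by
  by_contra! hcon
  choose a ha using exists_digits (p := p)
  choose z b hz hdvd using fun x ↦ hcon (a x)
  have hinj : Function.Injective fun x ↦ (z x, b x) := by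
    intro x y hxy
    obtain ⟨hzxy, hbxy⟩ := Prod.mk.inj hxy
    suffices x * z x = y * z x from
      mul_right_cancel₀ (Int.cast_ne_zero.2 (hz x)) this
    refine PadicInt.ext_of_toZModPow.1 fun n ↦ ?_
    have hsum : ∀ x', (∑ i ∈ Finset.range n, (p : ℤ) ^ i * (a x' i * z x + c i)) =
        (∑ i ∈ Finset.range n, (p : ℤ) ^ i * a x' i) * z x +
          ∑ i ∈ Finset.range n, (p : ℤ) ^ i * c i := by
      intro x'
      simp only [Finset.sum_mul, ← Finset.sum_add_distrib, mul_add, mul_assoc]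
    have hsub := dvd_sub (hdvd x n) (hdvd y n)
    rw [← hzxy, ← hbxy, sub_sub_sub_cancel_left, hsum, hsum, add_sub_add_right_eq_sub] at hsub
    rw [map_mul, map_mul, map_intCast, ha, ha, ← Int.cast_mul, ← Int.cast_mul,
      ZMod.intCast_eq_intCast_iff_dvd_sub]
    exact_mod_cast hsub
  have := uncountable_padicInt p
  exact not_countable hinj.countable

end PadicDigits

section Cardinals

theorem mk_pi_le_of_finite {ι : Type u} [Finite ι] {B : ι → Type u} {κ : Cardinal.{u}}
    (hκ : ℵ₀ ≤ κ) (hB : ∀ i, #(B i) ≤ κ) : #(∀ i, B i) ≤ κ := by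
  obtain ⟨n, hn⟩ := lt_aleph0.1 (mk_lt_aleph0 (α := ι))
  calc #(∀ i, B i) = prod fun i ↦ #(B i) := mk_pi B
    _ ≤ prod fun _ : ι ↦ κ := prod_le_prod _ _ hB
    _ = κ ^ (n : Cardinal) := by rw [prod_const', hn]
    _ ≤ κ := power_nat_le hκ

theorem mk_Iic_toType_ord_succ_le {κ : Cardinal.{u}} (hκ : ℵ₀ ≤ κ)
    (c : (Order.succ κ).ord.ToType) : #(Set.Iic c) ≤ κ := by
  have hcard : #(Order.succ κ).ord.ToType = Order.succ κ := mk_ord_toType _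
  have hinf : ℵ₀ ≤ #(Order.succ κ).ord.ToType := (hκ.trans (Order.le_succ κ)).trans_eq hcard.symm
  exact Order.lt_succ_iff.1 ((mk_Iic_lt c (by rw [hcard, Ordinal.type_toType]) hinf).trans_eq hcard)

theorem exists_injOn_of_mk_le {α β : Type u} [Nonempty β] {s : Set α} (h : #s ≤ #β) :
    ∃ f : α → β, Set.InjOn f s := by
  obtain ⟨g⟩ := h
  exact ⟨Function.extend Subtype.val g fun _ ↦ Classical.arbitrary β,
    Set.injOn_iff_injective.2 <| by
      simpa only [Set.domRestrict_eq, Function.extend_comp Subtype.val_injective] using g.injective⟩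

end Cardinals

section Truncations

variable {ι : Type u} {A : ι → Type v}

/-- A branch through the product of the trees `A i ^ <ω`. -/
abbrev Branch (A : ι → Type v) : Type max u v := ∀ i, ℕ → A i

/-- The type in which the truncations of branches live; the last entry is a branch whose
coordinate at the marked index is padded by default values. -/
abbrev Truncation (A : ι → Type v) : Type max u v := ι × ℕ × Branch A

variable [DecidableEq ι] [∀ i, Inhabited (A i)]

/-- The truncation `η ↿ (m, n)` of a branch `η`: the `m`-th coordinate is cut down to its first
`n` entries and all others are kept. The indices `m` and `n` are recorded. -/
def truncate (m : ι) (n : ℕ) (η : Branch A) : Truncation A :=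
  (m, n, Function.update η m fun t ↦ if t < n then η m t else default)

theorem truncate_eq_truncate_iff {m m' : ι} {n n' : ℕ} {η ν : Branch A} :
    truncate m n η = truncate m' n' ν ↔
      m = m' ∧ n = n' ∧ (∀ i ≠ m, η i = ν i) ∧ ∀ t < n, η m t = ν m t := by
  constructor
  · intro h
    obtain ⟨rfl, rfl, hupd⟩ := by simpa only [truncate, Prod.mk.injEq] using h
    refine ⟨rfl, rfl, fun i hi ↦ ?_, fun t ht ↦ ?_⟩
    · simpa only [Function.update_of_ne hi] using congrFun hupd i
    · simpa only [Function.update_self, if_pos ht] using congrFun (congrFun hupd m) t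
  · rintro ⟨rfl, rfl, hne, hlt⟩
    refine Prod.ext rfl (Prod.ext rfl (funext fun i ↦ ?_))
    obtain rfl | hi := eq_or_ne i m
    · simp only [truncate, Function.update_self]
      exact funext fun t ↦ ite_congr rfl (hlt t) fun _ ↦ rfl
    · simpa only [truncate, Function.update_of_ne hi] using hne i hi

theorem truncate_eq_truncate_of_le {m : ι} {n n' : ℕ} {η ν : Branch A} (hn : n ≤ n')
    (h : truncate m n' η = truncate m n' ν) : truncate m n η = truncate m n ν := by
  obtain ⟨-, -, hne, hlt⟩ := truncate_eq_truncate_iff.1 h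
  exact truncate_eq_truncate_iff.2 ⟨rfl, rfl, hne, fun t ht ↦ hlt t (ht.trans_le hn)⟩

theorem eq_of_forall_truncate_eq (m : ι) {η ν : Branch A}
    (h : ∀ n, truncate m n η = truncate m n ν) : η = ν := by
  funext i
  obtain rfl | hi := eq_or_ne i m
  · exact funext fun t ↦ (truncate_eq_truncate_iff.1 (h (t + 1))).2.2.2 t t.lt_succ_self
  · exact (truncate_eq_truncate_iff.1 (h 0)).2.2.1 i hi

/-- The rank `ρ` separates the branches in `U`: each `η ∈ U` has a truncation, in one of the
directions allowed by `u η`, which it shares only with branches of `U` of larger rank. -/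
def RankSeparates {W : Type*} [LT W] (U : Set (Branch A)) (u : Branch A → Finset ι)
    (ρ : Branch A → W) : Prop :=
  ∀ η ∈ U, ∃ m ∈ u η, ∃ n, ∀ ν ∈ U, truncate m n ν = truncate m n η → ν = η ∨ ρ η < ρ ν

theorem rankSeparates_of_injOn_nat {U : Set (Branch A)} {u : Branch A → Finset ι}
    {ρ : Branch A → ℕ} (hρ : Set.InjOn ρ U) (hu : ∀ η ∈ U, (u η).Nonempty) :
    RankSeparates U u ρ := by
  intro η hη
  obtain ⟨m, hm⟩ := hu η hη
  have hex : ∀ ν, ∃ n, truncate m n ν = truncate m n η → ν = η := fun ν ↦ by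
    by_contra! hcon
    exact (hcon 0).2 (eq_of_forall_truncate_eq m fun n ↦ (hcon n).1)
  choose N hN using hex
  have hfin : {ν ∈ U | ρ ν ≤ ρ η}.Finite :=
    Set.Finite.of_finite_image
      ((Set.finite_Iic (ρ η)).subset (Set.image_subset_iff.2 fun _ hν ↦ hν.2))
      (hρ.mono fun _ hν ↦ hν.1)
  refine ⟨m, hm, hfin.toFinset.sup N, fun ν hν heq ↦ or_iff_not_imp_right.2 fun hle ↦ ?_⟩
  have hν' : ν ∈ hfin.toFinset := hfin.mem_toFinset.2 ⟨hν, not_lt.1 hle⟩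
  exact hN ν (truncate_eq_truncate_of_le (Finset.le_sup hν') heq)

end Truncations

section Separation

variable {ι : Type u} {A : ι → Type u}

theorem mk_setOf_forall_apply_le_le [Finite ι] {B : ι → Type u} {κ : Cardinal.{u}} (hκ : ℵ₀ ≤ κ)
    {U : Set (∀ i, B i)} {o : ∀ i, B i → (Order.succ κ).ord.ToType}
    (ho : ∀ i, Set.InjOn (o i) (Function.eval i '' U)) (c : (Order.succ κ).ord.ToType) :
    #{η ∈ U | ∀ i, o i (η i) ≤ c} ≤ κ := by
  let code : {η ∈ U | ∀ i, o i (η i) ≤ c} → ι → Set.Iic c := fun η i ↦ ⟨o i (η.1 i), η.2.2 i⟩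
  have hcode : Function.Injective code := fun η ν h ↦ Subtype.ext <| funext fun i ↦
    ho i ⟨η, η.2.1, rfl⟩ ⟨ν, ν.2.1, rfl⟩ (congrArg Subtype.val (congrFun h i))
  exact (mk_le_of_injective hcode).trans
    (mk_pi_le_of_finite hκ fun _ ↦ mk_Iic_toType_ord_succ_le hκ c)

variable [DecidableEq ι] [∀ i, Inhabited (A i)] [Finite ι] [Nonempty ι]

-- Enumerate the coordinates of branches in order type `κ⁺`. A branch whose largest coordinate has
-- index `c` is one of at most `κ` many, and truncating in any other direction keeps that
-- coordinate, so it does not lower the index.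
theorem exists_rankSeparates_succ {κ : Cardinal.{u}} (hκ : ℵ₀ ≤ κ) {W : Type*} [LT W] {j : ℕ}
    (ih : ∀ (U : Set (Branch A)) (u : Branch A → Finset ι), #U ≤ κ → (∀ η ∈ U, j < (u η).card) →
      ∃ ρ : Branch A → W, RankSeparates U u ρ)
    (U : Set (Branch A)) (u : Branch A → Finset ι) (hU : #U ≤ Order.succ κ)
    (hu : ∀ η ∈ U, j + 1 < (u η).card) :
    ∃ ρ : Branch A → (Order.succ κ).ord.ToType ×ₗ W, RankSeparates U u ρ := by
  have hcard : #(Order.succ κ).ord.ToType = Order.succ κ := mk_ord_toType _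
  have : Nonempty (Order.succ κ).ord.ToType := by
    rw [← mk_ne_zero_iff, hcard]
    exact Order.succ_ne_bot κ
  choose o ho using fun i ↦ exists_injOn_of_mk_le
    ((mk_image_le (f := Function.eval i)).trans (hU.trans_eq hcard.symm))
  choose top htop using fun η : Branch A ↦ Finite.exists_max fun i ↦ o i (η i)
  let level (η : Branch A) := o (top η) (η (top η))
  have hfiber : ∀ c, ∃ ρ : Branch A → W,
      RankSeparates {η ∈ U | level η = c} (fun η ↦ (u η).erase (top η)) ρ := by
    refine fun c ↦ ih _ _ (le_trans (mk_le_mk_of_subset ?_)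
      (mk_setOf_forall_apply_le_le hκ ho c)) fun η hη ↦ ?_
    · exact fun η hη ↦ ⟨hη.1, fun i ↦ (htop η i).trans_eq hη.2⟩
    · have := hu η hη.1
      have := (u η).pred_card_le_card_erase (a := top η)
      omega
  choose ρ hρ using hfiber
  refine ⟨fun η ↦ toLex (level η, ρ (level η) η), fun η hη ↦ ?_⟩
  obtain ⟨m, hm, n, hn⟩ := hρ (level η) η ⟨hη, rfl⟩
  refine ⟨m, Finset.mem_of_mem_erase hm, n, fun ν hν heq ↦ ?_⟩
  have htopeq : ν (top η) = η (top η) :=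
    (truncate_eq_truncate_iff.1 heq).2.2.1 _ (Finset.ne_of_mem_erase hm).symm
  have hlevel : level η ≤ level ν := by
    simpa only [htopeq] using htop ν (top η)
  rw [Prod.Lex.toLex_lt_toLex]
  obtain hlt | hlevel_eq := hlevel.lt_or_eq
  · exact .inr (.inl hlt)
  · refine (hn ν ⟨hν, hlevel_eq.symm⟩ heq).imp_right fun h ↦ .inr ⟨hlevel_eq, ?_⟩
    rwa [← hlevel_eq]

variable (A) in
theorem exists_wellFoundedLT_rankSeparates (j : ℕ) :
    ∃ (W : Type u) (_ : LinearOrder W) (_ : WellFoundedLT W),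
      ∀ (U : Set (Branch A)) (u : Branch A → Finset ι), #U ≤ ℵ_ j →
        (∀ η ∈ U, j < (u η).card) → ∃ ρ : Branch A → W, RankSeparates U u ρ := by
  induction j with
  | zero =>
    refine ⟨ULift ℕ, inferInstance, inferInstance, fun U u hU hu ↦ ?_⟩
    rw [Nat.cast_zero, aleph_zero] at hU
    obtain ⟨f, hf⟩ := Set.countable_iff_exists_injOn.1 (le_aleph0_iff_set_countable.1 hU)
    exact ⟨ULift.up ∘ f, rankSeparates_of_injOn_nat hf fun η hη ↦ Finset.card_pos.1 (hu η hη)⟩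
  | succ j ih =>
    obtain ⟨W, _, _, hW⟩ := ih
    refine ⟨_, inferInstance, inferInstance, fun U u hU ↦
      exists_rankSeparates_succ (aleph0_le_aleph j) hW U u ?_⟩
    rwa [succ_aleph, ← Nat.cast_succ]

end Separation

section BlackBox

variable {ι : Type*} {A : ι → Type*} [∀ i, Inhabited (A i)] [LinearOrder ι] [WellFoundedGT ι]

-- The entries of `η` are chosen by recursion on `(m, n)`, larger `m` first, then smaller `n`:
-- `truncate m n η` involves only entries chosen before `η m n` and the coordinates below `m`,
-- on which `π m (η m n)` may be any prescribed function.
theorem exists_branch_forall_truncate_eq {Z : Type*}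
    {π : ∀ m, A m → (∀ i : Set.Iio m, ℕ → A i) → Z} (hπ : ∀ m, Function.Surjective (π m))
    (F : Truncation A → Z) :
    ∃ η : Branch A, ∀ m n, F (truncate m n η) = π m (η m n) fun i ↦ η i := by
  choose code hcode using hπ
  let r : ι × ℕ → ι × ℕ → Prop := Prod.Lex (· > ·) (· < ·)
  have hr : WellFounded r := WellFounded.prod_lex wellFounded_gt wellFounded_lt
  let step : ∀ p : ι × ℕ, (∀ q, r q p → A q.1) → A p.1 := fun p g ↦
    code p.1 fun ζ ↦ F (p.1, p.2, fun i t ↦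
      if h : i < p.1 then ζ ⟨i, h⟩ t else if h : r (i, t) p then g (i, t) h else default)
  let η : Branch A := fun i t ↦ hr.fix step (i, t)
  have hη : ∀ m n, η m n = step (m, n) fun q _ ↦ η q.1 q.2 := fun m n ↦ hr.fix_eq step (m, n)
  refine ⟨η, fun m n ↦ ?_⟩
  rw [hη m n, hcode]
  refine congrArg F (Prod.ext rfl (Prod.ext rfl (funext₂ fun i t ↦ ?_)))
  obtain h | rfl | h := lt_trichotomy i m
  · simp [truncate, h, h.ne]
  · simp [truncate, r, Prod.lex_def]
  · simp [truncate, r, Prod.lex_def, h, h.not_gt, h.ne']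

end BlackBox

namespace DyadicTower

section Basic

variable {S V : Type*}

variable (V) in
/-- The inclusion of `ℤ^(S)` into `ℚ^(S ⊕ V)`, the ambient space of all dyadic towers. -/
noncomputable def embed : (S →₀ ℤ) →ₗ[ℤ] (S ⊕ V →₀ ℚ) :=
  Finsupp.lmapDomain ℚ ℤ Sum.inl ∘ₗ Finsupp.mapRange.linearMap (Algebra.linearMap ℤ ℚ)

@[simp]
theorem embed_apply_inl (x : S →₀ ℤ) (s : S) : embed V x (Sum.inl s) = x s := by
  simp [embed, Finsupp.mapDomain_apply Sum.inl_injective]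

@[simp]
theorem embed_apply_inr (x : S →₀ ℤ) (v : V) : embed V x (Sum.inr v) = 0 :=
  Finsupp.mapDomain_of_notMem_range _ _ (by simp)

theorem embed_injective : Function.Injective (embed V : (S →₀ ℤ) → _) := fun x y h ↦
  Finsupp.ext fun s ↦ by simpa using DFunLike.congr_fun h (Sum.inl s)

theorem embed_mem_of_forall_single {M : Submodule ℤ (S ⊕ V →₀ ℚ)} {x : S →₀ ℤ}
    (h : ∀ s ∈ x.support, embed V (Finsupp.single s 1) ∈ M) : embed V x ∈ M := by
  rw [← x.sum_single, Finsupp.sum, map_sum]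
  refine M.sum_mem fun s hs ↦ ?_
  rw [← mul_one (x s), ← smul_eq_mul, ← Finsupp.smul_single, map_smul]
  exact M.smul_mem _ (h s hs)

variable (w : V → ℕ → S →₀ ℤ)

/-- The element `y v n` obtained from the generator `v` by `n` successive halvings: `y v 0 = v` and
`y v n = 2 y v (n + 1) + w v n`. -/
noncomputable def halving (v : V) (n : ℕ) : S ⊕ V →₀ ℚ :=
  ((2 : ℚ) ^ n)⁻¹ •
    (Finsupp.single (Sum.inr v) 1 - ∑ i ∈ Finset.range n, (2 : ℚ) ^ i • embed V (w v i))

theorem halving_apply_inl (v : V) (n : ℕ) (s : S) : halving w v n (Sum.inl s) =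
    -(((2 : ℚ) ^ n)⁻¹ * ∑ i ∈ Finset.range n, (2 : ℚ) ^ i * w v i s) := by
  simp [halving]

variable {w} in
theorem exists_lt_of_halving_apply_inl_ne_zero {v : V} {n : ℕ} {s : S}
    (h : halving w v n (Sum.inl s) ≠ 0) : ∃ i < n, w v i s ≠ 0 := by
  contrapose! h
  rw [halving_apply_inl, Finset.sum_eq_zero, mul_zero, neg_zero]
  intro i hi
  rw [h i (Finset.mem_range.1 hi), Int.cast_zero, mul_zero]

theorem halving_apply_inr_self (v : V) (n : ℕ) :
    halving w v n (Sum.inr v) = ((2 : ℚ) ^ n)⁻¹ := by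
  simp [halving]

theorem halving_apply_inr_of_ne {v v' : V} (h : v ≠ v') (n : ℕ) :
    halving w v n (Sum.inr v') = 0 := by
  simp [halving, h]

theorem halving_eq_two_smul_add (v : V) (n : ℕ) :
    halving w v n = (2 : ℤ) • halving w v (n + 1) + embed V (w v n) := by
  have hz : (2 : ℤ) • halving w v (n + 1) = (2 : ℚ) • halving w v (n + 1) := by
    rw [two_zsmul, two_smul]
  have hpow : (2 : ℚ) * ((2 : ℚ) ^ (n + 1))⁻¹ = ((2 : ℚ) ^ n)⁻¹ := by
    rw [pow_succ]
    field_simp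
  rw [hz, halving, halving, smul_smul, hpow, Finset.sum_range_succ, ← sub_sub, smul_sub _ _
    ((2 : ℚ) ^ n • _), smul_smul, inv_mul_cancel₀ (by positivity), one_smul, sub_add_cancel]

theorem halving_mem_of_le {M : Submodule ℤ (S ⊕ V →₀ ℚ)} (hM : LinearMap.range (embed V) ≤ M)
    {v : V} {m n : ℕ} (hmn : m ≤ n) (hn : halving w v n ∈ M) : halving w v m ∈ M := by
  induction hmn using Nat.decreasingInduction with
  | self => exact hn
  | of_succ i _ ih =>
    rw [halving_eq_two_smul_add]
    exact M.add_mem (M.smul_mem _ ih) (hM ⟨_, rfl⟩)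

/-- The group generated by `ℤ^(S)` and all the halvings of the elements of `U`. -/
noncomputable def tower (U : Set V) : Submodule ℤ (S ⊕ V →₀ ℚ) :=
  LinearMap.range (embed V) ⊔ Submodule.span ℤ (Set.image2 (halving w) U Set.univ)

variable {w} {U : Set V}

theorem embed_mem_tower (x : S →₀ ℤ) : embed V x ∈ tower w U :=
  Submodule.mem_sup_left ⟨x, rfl⟩

theorem halving_mem_tower {v : V} (hv : v ∈ U) (n : ℕ) : halving w v n ∈ tower w U :=
  Submodule.mem_sup_right (Submodule.subset_span ⟨v, hv, n, trivial, rfl⟩)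

theorem tower_le_iff {M : Submodule ℤ (S ⊕ V →₀ ℚ)} : tower w U ≤ M ↔
    LinearMap.range (embed V) ≤ M ∧ ∀ v ∈ U, ∀ n, halving w v n ∈ M := by
  rw [tower, sup_le_iff, Submodule.span_le, Set.image2_subset_iff]
  simp only [Set.mem_univ, forall_const, SetLike.mem_coe]

theorem tower_mono {U' : Set V} (h : U ⊆ U') : tower w U ≤ tower w U' :=
  sup_le_sup_left (Submodule.span_mono (Set.image2_subset_right h)) _

theorem exists_finset_mem_tower {x : S ⊕ V →₀ ℚ} (hx : x ∈ tower w U) :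
    ∃ F : Finset V, x ∈ tower w F := by
  classical
  obtain ⟨y, hy, z, hz, rfl⟩ := Submodule.mem_sup.1 hx
  obtain ⟨T, hTsub, hzT⟩ := Submodule.mem_span_finite_of_mem_span hz
  obtain ⟨F, N, -, -, hT⟩ := Finset.subset_set_image₂ hTsub
  refine ⟨F, Submodule.add_mem_sup hy (Submodule.span_mono (fun t ht ↦ ?_) hzT)⟩
  obtain ⟨v, hv, n, -, rfl⟩ := Finset.mem_image₂.1 (hT ht)
  exact ⟨v, hv, n, trivial, rfl⟩

end Basic

section Cardinality

variable {S V : Type u} {w : V → ℕ → S →₀ ℤ}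

theorem free_of_mk_le {κ : Cardinal.{u}} (hκ : ℵ₀ ≤ κ) {U : Set V}
    (hfree : ∀ U' : Set V, #U' ≤ κ → Module.Free ℤ (tower w U'))
    (H : AddSubgroup (tower w U)) (hH : #H ≤ κ) : Module.Free ℤ H := by
  choose F hF using fun h : H ↦ exists_finset_mem_tower h.1.2
  have hmk : #(⋃ h, (F h : Set V)) ≤ κ :=
    (mk_iUnion_le _).trans <| mul_le_of_le hκ hH <| ciSup_le' fun h ↦
      (mk_le_aleph0 (α := F h)).trans hκ
  have := hfree _ hmk
  let incl : H →+ tower w (⋃ h, (F h : Set V)) :=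
    AddMonoidHom.mk' (fun h ↦ ⟨h.1.1, tower_mono (Set.subset_iUnion _ h) (hF h)⟩) fun _ _ ↦ rfl
  have hincl : Function.Injective incl := fun x y hxy ↦
    Subtype.ext (Subtype.ext (Subtype.mk.inj hxy))
  exact free_of_injective incl.toIntLinearMap hincl

theorem mk_tower [Infinite S] (hV : #V ≤ #S) (U : Set V) : #(tower w U) = #S := by
  apply le_antisymm
  · calc #(tower w U) ≤ #(S ⊕ V →₀ ℚ) := mk_subtype_le _
      _ = #S := by
        rw [mk_finsupp_lift_of_infinite, mk_sum]
        simp [add_eq_left (aleph0_le_mk S) hV]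
  · refine mk_le_of_injective
      (f := fun s ↦ (⟨embed V (Finsupp.single s 1), embed_mem_tower _⟩ : tower w U))
      fun s t h ↦ ?_
    exact Finsupp.single_left_injective one_ne_zero (embed_injective (congrArg Subtype.val h))

end Cardinality

section Dual

variable {S V : Type*} (w : V → ℕ → S →₀ ℤ) (U : Set V)

/-- The inclusion of `ℤ^(S)` into the tower over it. -/
noncomputable def base : (S →₀ ℤ) →ₗ[ℤ] tower w U :=
  (embed V).codRestrict _ embed_mem_tower

variable {w U}

theorem apply_halving_zero_sub_sum (f : tower w U →ₗ[ℤ] ℤ) {v : V} (hv : v ∈ U) (n : ℕ) :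
    f ⟨halving w v 0, halving_mem_tower hv 0⟩ -
        ∑ i ∈ Finset.range n, 2 ^ i * f (base w U (w v i)) =
      2 ^ n * f ⟨halving w v n, halving_mem_tower hv n⟩ := by
  induction n with
  | zero => simp
  | succ n ih =>
    have hn : (⟨halving w v n, halving_mem_tower hv n⟩ : tower w U) =
        (2 : ℤ) • ⟨halving w v (n + 1), halving_mem_tower hv (n + 1)⟩ + base w U (w v n) :=
      Subtype.ext (halving_eq_two_smul_add w v n)
    rw [Finset.sum_range_succ, ← sub_sub, ih, hn, map_add, map_smul, smul_eq_mul]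
    ring

theorem eq_zero_of_comp_base_eq_zero {f : tower w U →ₗ[ℤ] ℤ} (hf : f ∘ₗ base w U = 0) :
    f = 0 := by
  suffices hle : tower w U ≤ (LinearMap.ker f).map (tower w U).subtype by
    ext x
    obtain ⟨y, hy, hyx⟩ := hle x.2
    rwa [Subtype.ext hyx] at hy
  refine tower_le_iff.2 ⟨?_, fun v hv n ↦ ⟨⟨_, halving_mem_tower hv n⟩, ?_, rfl⟩⟩
  · rintro _ ⟨x, rfl⟩
    exact ⟨base w U x, DFunLike.congr_fun hf x, rfl⟩
  have hpow : ∀ n, f ⟨halving w v 0, halving_mem_tower hv 0⟩ =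
      2 ^ n * f ⟨halving w v n, halving_mem_tower hv n⟩ := by
    intro n
    rw [← apply_halving_zero_sub_sum f hv n, Finset.sum_eq_zero, sub_zero]
    exact fun i _ ↦ mul_eq_zero_of_right _ (DFunLike.congr_fun hf (w v i))
  have hzero : f ⟨halving w v 0, halving_mem_tower hv 0⟩ = 0 := by
    refine Int.eq_zero_of_abs_lt_dvd ⟨_, hpow (f ⟨_, halving_mem_tower hv 0⟩).natAbs⟩ ?_
    rw [Int.abs_eq_natAbs]
    exact_mod_cast Nat.lt_two_pow_self
  exact (mul_eq_zero.1 ((hpow n).symm.trans hzero)).resolve_left (by positivity)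

end Dual

section Pivots

variable {S V W : Type*}

/-- Triangularity data for the relations `w v`, `v ∈ U`: from `start v` on, each `w v i` has a
coefficient `1` at its own pivot, and this pivot occurs in no other relation except those of
elements of larger rank. -/
structure Pivots (w : V → ℕ → S →₀ ℤ) (U : Set V) (W : Type*) [LT W] where
  rank : V → W
  start : V → ℕ
  /-- `pivot v n` belongs to the relation `w v (start v + n)`. -/
  pivot : V → ℕ → S
  apply_pivot : ∀ v ∈ U, ∀ n, w v (start v + n) (pivot v n) = 1
  triangular : ∀ v ∈ U, ∀ n, ∀ v' ∈ U, ∀ i, w v' i (pivot v n) ≠ 0 →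
    v' = v ∧ i = start v + n ∨ rank v < rank v'

namespace Pivots

variable [Preorder W] {w : V → ℕ → S →₀ ℤ} {U : Set V} (P : Pivots w U W)

/-- The basis of `tower w U` determined by the pivots: the generators of `ℤ^(S)` that are not
pivots, and the halvings `halving w v n` with `P.start v ≤ n`. -/
noncomputable def basisVector :
    {s // ∀ v ∈ U, ∀ n, s ≠ P.pivot v n} ⊕ U × ℕ → S ⊕ V →₀ ℚ
  | Sum.inl s => embed V (Finsupp.single s.1 1)
  | Sum.inr (v, n) => halving w v (P.start v + n)

/-- The coordinate in which the corresponding basis vector leads: a halving by `n + 1` steps leads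
in the pivot of the last relation used, and one by no steps in `v` itself. -/
def leadingCoord : {s // ∀ v ∈ U, ∀ n, s ≠ P.pivot v n} ⊕ U × ℕ → S ⊕ V
  | Sum.inl s => Sum.inl s.1
  | Sum.inr (v, 0) => Sum.inr v.1
  | Sum.inr (v, n + 1) => Sum.inl (P.pivot v n)

/-- The rank with respect to which the basis vectors are triangular. -/
def basisRank : {s // ∀ v ∈ U, ∀ n, s ≠ P.pivot v n} ⊕ U × ℕ → WithBot (W ×ₗ ℕ)
  | Sum.inl _ => ⊥
  | Sum.inr (v, n) => ((toLex (P.rank v, n) : W ×ₗ ℕ) : WithBot (W ×ₗ ℕ))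

theorem apply_pivot_of_ne {v : V} (hv : v ∈ U) {n i : ℕ} (hi : i ≠ P.start v + n) :
    w v i (P.pivot v n) = 0 := by
  by_contra h
  exact (P.triangular v hv n v hv i h).elim (fun h ↦ hi h.2) fun h ↦ lt_irrefl _ h

theorem basisVector_leadingCoord_ne_zero (i) : P.basisVector i (P.leadingCoord i) ≠ 0 := by
  match i with
  | Sum.inl s => simp [basisVector, leadingCoord]
  | Sum.inr (v, 0) => simp [basisVector, leadingCoord, halving_apply_inr_self]
  | Sum.inr (v, n + 1) =>
    have hsum : ∑ i ∈ Finset.range (P.start v + (n + 1)), (2 : ℚ) ^ i * w v i (P.pivot v n) =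
        2 ^ (P.start v + n) := by
      rw [Finset.sum_eq_single_of_mem (P.start v + n) (by simp)]
      · rw [P.apply_pivot v v.2, Int.cast_one, mul_one]
      · intro i _ hi
        rw [P.apply_pivot_of_ne v.2 hi, Int.cast_zero, mul_zero]
    simp [basisVector, leadingCoord, halving_apply_inl, hsum]

theorem eq_or_basisRank_lt (i j) (h : P.basisVector i (P.leadingCoord j) ≠ 0) :
    i = j ∨ P.basisRank j < P.basisRank i := by
  match i, j with
  | Sum.inl s, Sum.inl t =>
    refine .inl (congrArg Sum.inl (Subtype.ext (by_contra fun hst ↦ h ?_)))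
    simp [basisVector, leadingCoord, hst]
  | Sum.inl s, Sum.inr (v, 0) => simp [basisVector, leadingCoord] at h
  | Sum.inl s, Sum.inr (v, n + 1) =>
    simp [basisVector, leadingCoord, s.2 v v.2 n] at h
  | Sum.inr (v, n), Sum.inl s => exact .inr (WithBot.bot_lt_coe _)
  | Sum.inr (v', n'), Sum.inr (v, 0) =>
    obtain rfl | hne := eq_or_ne v' v
    · obtain rfl | hn := n'.eq_zero_or_pos
      · exact .inl rfl
      · exact .inr (WithBot.coe_lt_coe.2 (Prod.Lex.toLex_lt_toLex.2 (.inr ⟨rfl, hn⟩)))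
    · exact absurd (halving_apply_inr_of_ne w (Subtype.coe_ne_coe.2 hne) _) h
  | Sum.inr (v', n'), Sum.inr (v, n + 1) =>
    simp only [basisRank, WithBot.coe_lt_coe, Prod.Lex.toLex_lt_toLex]
    obtain ⟨i, hi, hw⟩ := exists_lt_of_halving_apply_inl_ne_zero h
    obtain ⟨hvv, hin⟩ | hlt := P.triangular v v.2 n v' v'.2 i hw
    · obtain rfl := Subtype.ext hvv
      obtain rfl | hn : n' = n + 1 ∨ n + 1 < n' := by omega
      · exact .inl rfl
      · exact .inr (.inr ⟨rfl, hn⟩)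
    · exact .inr (.inl hlt)

theorem linearIndependent_basisVector : LinearIndependent ℤ P.basisVector :=
  linearIndependent_of_triangular (fun j ↦ Finsupp.lapply (P.leadingCoord j)) P.basisRank
    P.basisVector_leadingCoord_ne_zero P.eq_or_basisRank_lt

-- The relation `y v i - 2 y v (i + 1) = w v i` expresses the pivot of `w v i` through basis vectors
-- and pivots of smaller rank.
theorem embed_single_pivot_mem_span [WellFoundedLT W] {v : V} (hv : v ∈ U) (n : ℕ) :
    embed V (Finsupp.single (P.pivot v n) 1) ∈ Submodule.span ℤ (Set.range P.basisVector) := by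
  classical
  induction hr : P.rank v using WellFoundedLT.induction generalizing v n with
  | ind r ih =>
    subst hr
    set M := Submodule.span ℤ (Set.range P.basisVector)
    have hhalving (n) : halving w v (P.start v + n) ∈ M :=
      Submodule.subset_span ⟨Sum.inr (⟨v, hv⟩, n), rfl⟩
    have hrelation : embed V (w v (P.start v + n)) ∈ M := by
      rw [eq_sub_of_add_eq' (halving_eq_two_smul_add w v (P.start v + n)).symm]
      exact M.sub_mem (hhalving n) (M.smul_mem _ (hhalving (n + 1)))
    have herase : embed V ((w v (P.start v + n)).erase (P.pivot v n)) ∈ M := by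
      refine embed_mem_of_forall_single fun s hs ↦ ?_
      rw [Finsupp.support_erase, Finset.mem_erase, Finsupp.mem_support_iff] at hs
      by_cases hpivot : ∀ v' ∈ U, ∀ n', s ≠ P.pivot v' n'
      · exact Submodule.subset_span ⟨Sum.inl ⟨s, hpivot⟩, rfl⟩
      push Not at hpivot
      obtain ⟨v', hv', n', rfl⟩ := hpivot
      obtain ⟨rfl, hn⟩ | hlt := P.triangular v' hv' n' v hv _ hs.2
      · exact absurd (by rw [Nat.add_left_cancel hn]) hs.1
      · exact ih _ hlt hv' n' rfl
    have hsplit : Finsupp.single (P.pivot v n) 1 + (w v (P.start v + n)).erase (P.pivot v n) =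
        w v (P.start v + n) := by
      rw [← P.apply_pivot v hv n, Finsupp.single_add_erase]
    rw [eq_sub_of_add_eq hsplit, map_sub]
    exact M.sub_mem hrelation herase

theorem span_range_basisVector [WellFoundedLT W] :
    Submodule.span ℤ (Set.range P.basisVector) = tower w U := by
  apply le_antisymm
  · rw [Submodule.span_le]
    rintro _ ⟨s | ⟨v, n⟩, rfl⟩
    · exact embed_mem_tower _
    · exact halving_mem_tower v.2 _
  · have hbase : LinearMap.range (embed V) ≤ Submodule.span ℤ (Set.range P.basisVector) := by
      rintro _ ⟨x, rfl⟩
      refine embed_mem_of_forall_single fun s _ ↦ ?_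
      by_cases hpivot : ∀ v ∈ U, ∀ n, s ≠ P.pivot v n
      · exact Submodule.subset_span ⟨Sum.inl ⟨s, hpivot⟩, rfl⟩
      push Not at hpivot
      obtain ⟨v, hv, n, rfl⟩ := hpivot
      exact P.embed_single_pivot_mem_span hv n
    refine tower_le_iff.2 ⟨hbase, fun v hv n ↦ ?_⟩
    exact halving_mem_of_le w hbase (n.le_add_left (P.start v))
      (Submodule.subset_span ⟨Sum.inr (⟨v, hv⟩, n), rfl⟩)

theorem free_tower [WellFoundedLT W] (P : Pivots w U W) : Module.Free ℤ (tower w U) := by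
  rw [← P.span_range_basisVector]
  exact Module.Free.of_basis (Module.Basis.span P.linearIndependent_basisVector)

end Pivots

end Pivots

end DyadicTower

section ShelahGroup

open DyadicTower

variable {ι : Type u} {A : ι → Type u} [Fintype ι] [DecidableEq ι] [∀ i, Inhabited (A i)]

/-- The relations of Shelah's group, whose generators are the finite sequences of truncations:
in the tower over them, `(s, η)` plays the role of the 2-adic sum
`∑ n, 2 ^ n • (a η n • s + ∑ m, (truncate m n η :: s))`. -/
noncomputable def shelahRelation (a : Branch A → ℕ → ℤ) (v : List (Truncation A) × Branch A)
    (n : ℕ) : List (Truncation A) →₀ ℤ :=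
  Finsupp.single v.1 (a v.2 n) + ∑ m, Finsupp.single (truncate m n v.2 :: v.1) 1

variable {a : Branch A → ℕ → ℤ}

theorem shelahRelation_apply_truncate_cons (s : List (Truncation A)) (η : Branch A) (m : ι)
    (n : ℕ) : shelahRelation a (s, η) n (truncate m n η :: s) = 1 := by
  have hne : ∀ m' ≠ m, truncate m' n η :: s ≠ truncate m n η :: s := fun m' hm' h ↦
    hm' (truncate_eq_truncate_iff.1 (List.cons_eq_cons.1 h).1).1
  simp only [shelahRelation, Finsupp.add_apply, Finsupp.finsetSum_apply]
  rw [Finsupp.single_eq_of_ne (List.cons_ne_self _ _), zero_add,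
    Finset.sum_eq_single_of_mem m (Finset.mem_univ m), Finsupp.single_eq_same]
  exact fun m' _ hm' ↦ Finsupp.single_eq_of_ne (hne m' hm').symm

theorem eq_or_exists_of_shelahRelation_apply_ne_zero {v : List (Truncation A) × Branch A} {n : ℕ}
    {s : List (Truncation A)} (h : shelahRelation a v n s ≠ 0) :
    s = v.1 ∨ ∃ m, s = truncate m n v.2 :: v.1 := by
  contrapose! h
  simp only [shelahRelation, Finsupp.add_apply, Finsupp.finsetSum_apply]
  rw [Finsupp.single_eq_of_ne h.1, zero_add]
  exact Finset.sum_eq_zero fun m _ ↦ Finsupp.single_eq_of_ne (h.2 m)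

theorem nonempty_pivots_shelahRelation [Nonempty ι]
    {U : Set (List (Truncation A) × Branch A)} {W : Type*} [Preorder W]
    {ρ : List (Truncation A) → Branch A → W} {u : Branch A → Finset ι}
    (hρ : ∀ s, RankSeparates {η | (s, η) ∈ U} u (ρ s)) :
    Nonempty (Pivots (shelahRelation a) U (ℕ ×ₗ W)) := by
  have hex : ∀ v : List (Truncation A) × Branch A, ∃ m n, v ∈ U → ∀ ν, (v.1, ν) ∈ U →
      truncate m n ν = truncate m n v.2 → ν = v.2 ∨ ρ v.1 v.2 < ρ v.1 ν := by
    intro v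
    by_cases hv : v ∈ U
    · obtain ⟨m, -, n, hmn⟩ := hρ v.1 v.2 hv
      exact ⟨m, n, fun _ ↦ hmn⟩
    · exact ⟨Classical.arbitrary ι, 0, fun h ↦ absurd h hv⟩
  choose m N hmN using hex
  refine ⟨⟨fun v ↦ toLex (v.1.length, ρ v.1 v.2), N, fun v n ↦ truncate (m v) (N v + n) v.2 :: v.1,
    fun v _ n ↦ shelahRelation_apply_truncate_cons _ _ _ _, ?_⟩⟩
  rintro ⟨s, η⟩ hv n ⟨s', ν⟩ hv' i hne
  rw [Prod.Lex.toLex_lt_toLex]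
  obtain rfl | ⟨m', hcons⟩ := eq_or_exists_of_shelahRelation_apply_ne_zero hne
  · exact .inr (.inl (Nat.lt_succ_self _))
  obtain ⟨htrunc, rfl⟩ := List.cons_eq_cons.1 hcons
  obtain ⟨rfl, rfl, -⟩ := truncate_eq_truncate_iff.1 htrunc
  obtain rfl | hlt := hmN _ hv ν hv' (truncate_eq_truncate_of_le (Nat.le_add_right _ n) htrunc.symm)
  · exact .inl ⟨rfl, rfl⟩
  · exact .inr (.inr ⟨rfl, hlt⟩)

theorem free_tower_shelahRelation {k : ℕ} (hk : k < Fintype.card ι)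
    {U : Set (List (Truncation A) × Branch A)} (hU : #U ≤ ℵ_ k) :
    Module.Free ℤ (tower (shelahRelation a) U) := by
  have : Nonempty ι := Fintype.card_pos_iff.1 (Nat.zero_lt_of_lt hk)
  obtain ⟨W, _, _, hW⟩ := exists_wellFoundedLT_rankSeparates A k
  have hfiber : ∀ s : List (Truncation A), #{η | (s, η) ∈ U} ≤ ℵ_ k := fun s ↦
    (mk_preimage_of_injective _ _ (Prod.mk_right_injective s)).trans hU
  choose ρ hρ using fun s ↦ hW _ (fun _ ↦ Finset.univ) (hfiber s) fun _ _ ↦ hk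
  obtain ⟨P⟩ := nonempty_pivots_shelahRelation hρ
  exact P.free_tower

theorem free_addSubgroup_of_mk_lt_aleph {k : ℕ} (hk : k < Fintype.card ι)
    {U : Set (List (Truncation A) × Branch A)} (H : AddSubgroup (tower (shelahRelation a) U))
    (hH : #H < ℵ_ (k + 1)) : Module.Free ℤ H := by
  rw [← succ_aleph, Order.lt_succ_iff] at hH
  exact free_of_mk_le (aleph0_le_aleph k) (fun _ ↦ free_tower_shelahRelation hk) H hH

theorem apply_base_shelahRelation (U : Set (List (Truncation A) × Branch A))
    (f : tower (shelahRelation a) U →ₗ[ℤ] ℤ) (v : List (Truncation A) × Branch A) (n : ℕ) :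
    f (base _ U (shelahRelation a v n)) =
      a v.2 n * f (base _ U (Finsupp.single v.1 1)) +
        ∑ m, f (base _ U (Finsupp.single (truncate m n v.2 :: v.1) 1)) := by
  have hsmul : Finsupp.single v.1 (a v.2 n) = a v.2 n • Finsupp.single v.1 (1 : ℤ) := by simp
  rw [shelahRelation, hsmul, map_add, map_add, map_smul, map_smul, smul_eq_mul, map_sum, map_sum]

theorem eq_zero_of_forall_exists_sum_eq {c : Branch A → ℕ → ℤ}
    (hc : ∀ F : Truncation A → ℤ, ∃ η, ∀ n, ∑ m, F (truncate m n η) = c η n)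
    (ha : ∀ η, ∀ z b : ℤ, z ≠ 0 →
      ¬ ∀ n, (2 : ℤ) ^ n ∣ b - ∑ i ∈ Finset.range n, 2 ^ i * (a η i * z + c η i))
    (f : tower (shelahRelation a) Set.univ →ₗ[ℤ] ℤ) : f = 0 := by
  suffices hgen : ∀ s, f (base _ _ (Finsupp.single s 1)) = 0 from
    eq_zero_of_comp_base_eq_zero (Finsupp.lhom_ext' fun s ↦ LinearMap.ext_ring (hgen s))
  intro s
  by_contra hs
  obtain ⟨η, hη⟩ := hc fun t ↦ f (base _ _ (Finsupp.single (t :: s) 1))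
  have hrel : ∀ i, f (base _ _ (shelahRelation a (s, η) i)) =
      a η i * f (base _ _ (Finsupp.single s 1)) + c η i := fun i ↦ by
    rw [apply_base_shelahRelation, hη]
  refine ha η _ (f ⟨_, halving_mem_tower (Set.mem_univ (s, η)) 0⟩) hs fun n ↦ ?_
  simp_rw [← hrel]
  exact Dvd.intro _ (apply_halving_zero_sub_sum f (Set.mem_univ (s, η)) n).symm

theorem mk_tower_shelahRelation [Nonempty ι] [Infinite (Branch A)]
    (U : Set (List (Truncation A) × Branch A)) :
    #(tower (shelahRelation a) U) = #(Branch A) := by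
  have hinf : ℵ₀ ≤ #(Branch A) := aleph0_le_mk _
  have htrunc : #(Truncation A) = #(Branch A) := by
    rw [mk_prod, mk_prod, mk_nat, lift_aleph0, lift_id, lift_id, lift_uzero, aleph0_mul_eq hinf]
    exact mul_eq_right hinf (mk_lt_aleph0.le.trans hinf) (mk_ne_zero ι)
  have : Infinite (Truncation A) := infinite_iff.2 (hinf.trans_eq htrunc.symm)
  have hlist : #(List (Truncation A)) = #(Branch A) := (mk_list_eq_mk _).trans htrunc
  rw [mk_tower _ U, hlist]
  rw [← mul_def, hlist, mul_eq_self hinf]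

end ShelahGroup

section Coding

theorem mk_nat_fun_eq_beth_add_one {α : Type u} {o : Ordinal.{u}} (hα : #α = ℶ_ (o + 1)) :
    #(ℕ → α) = ℶ_ (o + 1) := by
  have hpow : #(ℕ → α) = #α ^ ℵ₀ := by simp
  rw [hpow, hα, beth_add_one, ← power_mul, mul_aleph0_eq (aleph0_le_beth o)]

theorem exists_surjective_int_fun {α X : Type u} {o : Ordinal.{u}} (hX : #X ≤ ℶ_ o)
    (hα : #α = ℶ_ (o + 1)) : ∃ π : α → X → ℤ, Function.Surjective π := by
  have hle : #(X → ℤ) ≤ #α := by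
    calc #(X → ℤ) = ℵ₀ ^ #X := by simp
      _ ≤ ℵ₀ ^ ℶ_ o := power_le_power_left aleph0_ne_zero hX
      _ = 2 ^ ℶ_ o := power_eq_two_power (aleph0_le_beth o)
        (by exact_mod_cast natCast_lt_aleph0.le) (aleph0_le_beth o)
      _ = #α := by rw [hα, beth_add_one]
  obtain ⟨code⟩ := hle
  exact ⟨Function.invFun code, Function.invFun_surjective code.injective⟩

theorem exists_mk_branch_eq_beth_and_surjective (k : ℕ) :
    ∃ (A : Fin (k + 1) → Type) (_ : ∀ i, Inhabited (A i)), #(Branch A) = ℶ_ (k + 1) ∧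
      ∀ m, ∃ π : A m → (∀ i : Set.Iio m, ℕ → A i) → ℤ, Function.Surjective π := by
  let A (i : Fin (k + 1)) : Type := (ℶ_ ((i : ℕ) + 1)).out
  have hA : ∀ i, #(A i) = ℶ_ ((i : ℕ) + 1) := fun i ↦ mk_out _
  have hseq : ∀ i, #(ℕ → A i) = ℶ_ ((i : ℕ) + 1) := fun i ↦ mk_nat_fun_eq_beth_add_one (hA i)
  have hbeth : ∀ {m n : ℕ}, m < n → ℶ_ ((m : Ordinal) + 1) ≤ ℶ_ n := fun h ↦
    beth_le_beth.2 (by exact_mod_cast h)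
  have : ∀ i, Nonempty (A i) := fun i ↦ mk_ne_zero_iff.1 ((hA i).trans_ne (beth_ne_zero _))
  refine ⟨A, fun i ↦ Classical.inhabited_of_nonempty (this i), le_antisymm ?_ ?_, fun m ↦ ?_⟩
  · exact_mod_cast mk_pi_le_of_finite (aleph0_le_beth _) fun i ↦ (hseq i).trans_le (hbeth i.2)
  · calc ℶ_ (k + 1) = #(ℕ → A (Fin.last k)) := by rw [hseq, Fin.val_last]
      _ ≤ #(Branch A) := mk_le_of_surjective (Function.surjective_eval _)
  · exact exists_surjective_int_fun (mk_pi_le_of_finite (aleph0_le_beth _) fun i ↦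
      (hseq i).trans_le (hbeth i.2)) (hA m)

end Coding

/-- For every natural number `k` there is an abelian group `G` of
cardinality `ℶ_{k+1}` which is `ℵ_{k+1}`-free (every subgroup of cardinality less than
`ℵ_{k+1}` is a free abelian group) and such that the only group homomorphism from `G` to
`ℤ` is the zero homomorphism. -/
theorem stmt0 (k : ℕ) :
    ∃ (G : Type) (_ : AddCommGroup G),
      #G = Cardinal.beth (k + 1) ∧
      (∀ H : AddSubgroup G, #H < Cardinal.aleph (k + 1) → Module.Free ℤ H) ∧
      ∀ f : G →+ ℤ, f = 0 := by
  obtain ⟨A, _, hcard, hcode⟩ := exists_mk_branch_eq_beth_and_surjective k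
  choose π hπ using hcode
  let prediction (η : Branch A) (n : ℕ) : ℤ := ∑ m, π m (η m n) fun i ↦ η i
  choose a ha using fun η ↦ exists_digits_forall_not_dvd 2 (prediction η)
  have hpredict : ∀ F : Truncation A → ℤ, ∃ η, ∀ n, ∑ m, F (truncate m n η) = prediction η n := by
    intro F
    obtain ⟨η, hη⟩ := exists_branch_forall_truncate_eq hπ F
    exact ⟨η, fun n ↦ Finset.sum_congr rfl fun m _ ↦ hη m n⟩
  have : Infinite (Branch A) := infinite_iff.2 ((aleph0_le_beth _).trans_eq hcard.symm)
  refine ⟨DyadicTower.tower (shelahRelation a) Set.univ, inferInstance,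
    (mk_tower_shelahRelation _).trans hcard,
    free_addSubgroup_of_mk_lt_aleph (by simp), fun f ↦ ?_⟩
  have hf : f.toIntLinearMap = 0 := eq_zero_of_forall_exists_sum_eq hpredict ha _
  exact AddMonoidHom.ext fun x ↦ LinearMap.congr_fun hf x
end

section
/- Let (S, Λ) be a combinatorial k-parameter admitting a (Λ, χ̄)-black box where χ_m = 2^{ℵ_0} for every m ≤ k (taking S_m = S for all m ≤ k). Then there exists a function a : Λ × ℕ → ℤ such that, in the group G_x for the abelian-group k-parameter x = (S, Λ, a), every group homomorphism h : G_x → ℤ satisfies h(z) = 0, where z is the distinguished generator of G_x. -/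
open Cardinal

namespace Sh883

/-- A "restricted tuple": the result of replacing the `m`-th coordinate of a `(k+1)`-tuple
of functions `ℕ → S` by a finite sequence (list) of elements of `S`, keeping the other
coordinates. -/
structure Res (k : ℕ) (S : Type u) where
  m : Fin (k + 1)
  seq : List S
  rest : (l : Fin (k + 1)) → l ≠ m → ℕ → S

/-- `η̄↾⟨m,n⟩` : replace the `m`-th coordinate of `η̄` by the finite sequence
`⟨η_m(0), …, η_m(n-1)⟩`. -/
def restrictAt {k : ℕ} {S : Type u} (η : Fin (k + 1) → ℕ → S) (m : Fin (k + 1)) (n : ℕ) :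
    Res k S :=
  ⟨m, List.ofFn fun i : Fin n => η m i, fun l _ => η l⟩

/-- `Λ_m = {η̄↾⟨m,n⟩ : η̄ ∈ Λ, n ∈ ℕ}`. -/
def LambdaResAt {k : ℕ} {S : Type u} (Λ : Set (Fin (k + 1) → ℕ → S)) (m : Fin (k + 1)) :
    Set (Res k S) :=
  {ν | ∃ η ∈ Λ, ∃ n : ℕ, ν = restrictAt η m n}

/-- `Λ_0 ∪ … ∪ Λ_k`. -/
def LambdaRes {k : ℕ} {S : Type u} (Λ : Set (Fin (k + 1) → ℕ → S)) : Set (Res k S) :=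
  ⋃ m, LambdaResAt Λ m

/-- The generators of the group `G_x`: `x_ν` for `ν ∈ Λ_0 ∪ … ∪ Λ_k`, `y_{η̄,n}` for
`η̄ ∈ Λ`, `n ∈ ℕ`, and `z`. -/
inductive Gen (k : ℕ) (S : Type u) (Λ : Set (Fin (k + 1) → ℕ → S)) : Type u where
  | X : ↥(LambdaRes Λ) → Gen k S Λ
  | Y : ↥Λ → ℕ → Gen k S Λ
  | Z : Gen k S Λ

/-- `η̄↾⟨m,n⟩` as an element of `Λ_0 ∪ … ∪ Λ_k`, for `η̄ ∈ Λ`. -/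
def resMem {k : ℕ} {S : Type u} {Λ : Set (Fin (k + 1) → ℕ → S)} (η : ↥Λ) (m : Fin (k + 1))
    (n : ℕ) : ↥(LambdaRes Λ) :=
  ⟨restrictAt (η : Fin (k + 1) → ℕ → S) m n, Set.mem_iUnion.2 ⟨m, (η : _), η.2, n, rfl⟩⟩

/-- The relation element `n!·y_{η̄,n+1} − y_{η̄,n} − a(η̄,n)·z − Σ_{m≤k} x_{η̄↾⟨m,n⟩}`. -/
def relEl {k : ℕ} {S : Type u} {Λ : Set (Fin (k + 1) → ℕ → S)} (a : ↥Λ → ℕ → ℤ)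
    (η : ↥Λ) (n : ℕ) : FreeAbelianGroup (Gen k S Λ) :=
  (n.factorial : ℤ) • FreeAbelianGroup.of (Gen.Y η (n + 1))
    - FreeAbelianGroup.of (Gen.Y η n)
    - a η n • FreeAbelianGroup.of Gen.Z
    - ∑ m : Fin (k + 1), FreeAbelianGroup.of (Gen.X (resMem η m n))

/-- The subgroup of relations. -/
def relSub {k : ℕ} {S : Type u} {Λ : Set (Fin (k + 1) → ℕ → S)} (a : ↥Λ → ℕ → ℤ) :
    AddSubgroup (FreeAbelianGroup (Gen k S Λ)) :=
  AddSubgroup.closure {g | ∃ (η : ↥Λ) (n : ℕ), g = relEl a η n}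

/-- The group `G_x` of the abelian-group `k`-parameter `x = (S, Λ, a)`. -/
abbrev Gx {k : ℕ} {S : Type u} {Λ : Set (Fin (k + 1) → ℕ → S)} (a : ↥Λ → ℕ → ℤ) : Type u :=
  FreeAbelianGroup (Gen k S Λ) ⧸ relSub a


/-- The image of the generator `x_ν` in `G_x`. -/
def xg {k : ℕ} {S : Type u} {Λ : Set (Fin (k + 1) → ℕ → S)} (a : ↥Λ → ℕ → ℤ)
    (ν : ↥(LambdaRes Λ)) : Gx a :=
  QuotientAddGroup.mk (FreeAbelianGroup.of (Gen.X ν))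

/-- The image of the generator `y_{η̄,n}` in `G_x`. -/
def yg {k : ℕ} {S : Type u} {Λ : Set (Fin (k + 1) → ℕ → S)} (a : ↥Λ → ℕ → ℤ)
    (η : ↥Λ) (n : ℕ) : Gx a :=
  QuotientAddGroup.mk (FreeAbelianGroup.of (Gen.Y η n))

/-- The image of the distinguished generator `z` in `G_x`. -/
def zg {k : ℕ} {S : Type u} {Λ : Set (Fin (k + 1) → ℕ → S)} (a : ↥Λ → ℕ → ℤ) : Gx a :=
  QuotientAddGroup.mk (FreeAbelianGroup.of Gen.Z)

/-- The subgroup `G_U` of `G_x`, for a set `U` of functions `ℕ → S`: generated by `z`,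
the `y_{η̄,n}` for `η̄ ∈ Λ` with all coordinates in `U`, and the `x_{η̄↾⟨m,n⟩}` for
`η̄` a `(k+1)`-tuple of members of `U` with `η̄↾⟨m,n⟩ ∈ Λ_m`. -/
def GU {k : ℕ} {S : Type u} {Λ : Set (Fin (k + 1) → ℕ → S)} (a : ↥Λ → ℕ → ℤ)
    (U : Set (ℕ → S)) : AddSubgroup (Gx a) :=
  AddSubgroup.closure
    ({zg a}
      ∪ {g | ∃ (η : ↥Λ) (n : ℕ),
          (∀ l : Fin (k + 1), (η : Fin (k + 1) → ℕ → S) l ∈ U) ∧ g = yg a η n}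
      ∪ {g | ∃ (η : Fin (k + 1) → ℕ → S) (m : Fin (k + 1)) (n : ℕ) (ν : ↥(LambdaRes Λ)),
          (∀ l : Fin (k + 1), η l ∈ U) ∧ (ν : Res k S) = restrictAt η m n ∧ g = xg a ν})

/-- The subgroup `G_{U,u}` of `G_x`: generated by the union of the subgroups
`G_{U ∪ (u ∖ {η})}` for `η ∈ u`. -/
def GUu {k : ℕ} {S : Type u} {Λ : Set (Fin (k + 1) → ℕ → S)} (a : ↥Λ → ℕ → ℤ)
    (U u : Set (ℕ → S)) : AddSubgroup (Gx a) :=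
  ⨆ η ∈ u, GU a (U ∪ (u \ {η}))

/-- A `(Λ, χ̄)`-black box: a family of ordinals `α_{η̄,m,n} < χ_m` such that every
function `h` on `Λ_0 ∪ … ∪ Λ_k` with `h(ν)` an ordinal `< χ_m` for `ν ∈ Λ_m` is
predicted: there is `η̄ ∈ Λ` with `h(η̄↾⟨m,n⟩) = α_{η̄,m,n}` for all `m ≤ k`, `n ∈ ℕ`. -/
def IsBlackBox {k : ℕ} {S : Type u} (Λ : Set (Fin (k + 1) → ℕ → S))
    (χ : Fin (k + 1) → Cardinal.{u}) (A : ↥Λ → Fin (k + 1) → ℕ → Ordinal.{u}) : Prop :=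
  (∀ (η : ↥Λ) (m : Fin (k + 1)) (n : ℕ), A η m n < (χ m).ord) ∧
    ∀ h : Res k S → Ordinal.{u},
      (∀ m : Fin (k + 1), ∀ ν ∈ LambdaResAt Λ m, h ν < (χ m).ord) →
      ∃ η : ↥Λ, ∀ (m : Fin (k + 1)) (n : ℕ),
        h (restrictAt (η : Fin (k + 1) → ℕ → S) m n) = A η m n

end Sh883

/-!
A homomorphism `h` from `G_x` turns the relations at `η̄` into a recurrence for the values
`h(y_{η̄,n})`, whose other data are the `h(x_{η̄↾⟨m,n⟩})`, `h(z)` and `a(η̄,·)`. If two choices `a`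
and `a'` of `a(η̄,·)` admit solutions with the same starting value, then at the first `n` where they
differ `n!` divides `(a n - a' n) h(z)`. For `h(z) ≠ 0` and large `n` this is impossible with
`a n, a' n ∈ {0, 1}`, so continuum many choices would need distinct starting values. The target is
too small for that, hence some choice makes the recurrence unsolvable. This choice depends only on
the `h(x_{η̄↾⟨m,n⟩})` and `h(z)`, so it can be made beforehand from the black box's prediction of
the map `ν ↦ (h(x_ν), h(z))`.
-/

namespace Sh883

section Recurrence

variable {H : Type v} [AddCommGroup H]

/-- The recurrence `d n · y (n + 1) = y n + a n · c + s n`. For `d n = n!`, this is the system that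
the relations of `G_x` at one `η̄ ∈ Λ` impose on the images of the `y_{η̄,n}`, where `c` and `s n`
are the images of `z` and of the sum of the `x_{η̄↾⟨m,n⟩}`. -/
def SolvesRecurrence (d : ℕ → ℤ) (c : H) (s : ℕ → H) (a : ℕ → ℤ) (y : ℕ → H) : Prop :=
  ∀ n, d n • y (n + 1) = y n + a n • c + s n

/-- The first Ulm subgroup of `H`, the intersection of the `n • H` over `n ≠ 0`, is trivial. For a
torsion-free `H` this says that `H` is reduced, which is how targets such as `ℚ` are excluded. -/
def HasTrivialUlmSubgroup (H : Type v) [AddCommGroup H] : Prop :=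
  ∀ c : H, c ≠ 0 → ∃ n : ℕ, n ≠ 0 ∧ ∀ w : H, n • w ≠ c

theorem hasTrivialUlmSubgroup_int : HasTrivialUlmSubgroup ℤ := by
  refine fun c hc => ⟨c.natAbs + 1, Nat.succ_ne_zero _, fun w hw => ?_⟩
  have hdvd : c.natAbs + 1 ∣ c.natAbs := Int.natCast_dvd.1 ⟨w, by rw [← nsmul_eq_mul, hw]⟩
  exact absurd (Nat.le_of_dvd (Int.natAbs_pos.2 hc) hdvd) (Nat.not_succ_le_self _)

theorem HasTrivialUlmSubgroup.infinite_setOf_factorial_zsmul_ne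
    (hH : HasTrivialUlmSubgroup H) {c : H} (hc : c ≠ 0) :
    {n : ℕ | ∀ w : H, (n.factorial : ℤ) • w ≠ c}.Infinite := by
  obtain ⟨N, hN, hNc⟩ := hH c hc
  refine (Set.Ici_infinite N).mono fun n hn w hw => ?_
  obtain ⟨q, hq⟩ := Nat.dvd_factorial (Nat.pos_of_ne_zero hN) hn
  refine hNc (q • w) ?_
  rw [← hw, natCast_zsmul, hq, mul_nsmul']

theorem SolvesRecurrence.coeff_eq_of_zero_eq [IsAddTorsionFree H] {d : ℕ → ℤ}
    (hd : ∀ n, d n ≠ 0) {c : H} {s : ℕ → H} {a a' : ℕ → ℤ} {y y' : ℕ → H}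
    (hy : SolvesRecurrence d c s a y) (hy' : SolvesRecurrence d c s a' y')
    (ha : ∀ n (w : H), d n • w = (a n - a' n) • c → a n = a' n) (h0 : y 0 = y' 0) : a = a' := by
  have coeff_eq {n : ℕ} (hn : y n = y' n) : a n = a' n := by
    refine ha n (y (n + 1) - y' (n + 1)) ?_
    rw [smul_sub, hy n, hy' n, hn, sub_smul]
    abel
  have sol_eq (n : ℕ) : y n = y' n := by
    induction n with
    | zero => exact h0
    | succ n ih => exact zsmul_right_injective (hd n) (by simp only [hy n, hy' n, ih, coeff_eq ih])
  exact funext fun n => coeff_eq (sol_eq n)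

theorem eq_of_zsmul_eq_indicator_sub_smul {d : ℕ → ℤ} {c : H} {s t : Set ℕ} {n : ℕ}
    (hs : n ∈ s → ∀ w : H, d n • w ≠ c) (ht : n ∈ t → ∀ w : H, d n • w ≠ c) {w : H}
    (hw : d n • w = (s.indicator (1 : ℕ → ℤ) n - t.indicator 1 n) • c) :
    s.indicator (1 : ℕ → ℤ) n = t.indicator 1 n := by
  by_cases hns : n ∈ s <;> by_cases hnt : n ∈ t
  · simp [hns, hnt]
  · exact absurd (by simpa [hns, hnt] using hw) (hs hns w)
  · exact absurd (by simpa [hns, hnt, neg_eq_iff_eq_neg] using hw) (ht hnt (-w))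
  · simp [hns, hnt]

theorem exists_coeff_forall_not_solvesRecurrence [IsAddTorsionFree H] (hH : #H < 𝔠) {d : ℕ → ℤ}
    (hd : ∀ n, d n ≠ 0) {c : H} (hc : {n | ∀ w : H, d n • w ≠ c}.Infinite) (s : ℕ → H) :
    ∃ a : ℕ → ℤ, ∀ y, ¬ SolvesRecurrence d c s a y := by
  by_contra! hsol
  set T := {n | ∀ w : H, d n • w ≠ c}
  let coeff (B : Set T) : ℕ → ℤ := (Subtype.val '' B).indicator 1
  choose y hy using fun B : Set T => hsol (coeff B)
  have mem_T {B : Set T} {n : ℕ} (hn : n ∈ Subtype.val '' B) : n ∈ T :=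
    Subtype.coe_image_subset T B hn
  have start_injective : Function.Injective fun B => y B 0 := fun B B' h0 =>
    Set.image_injective.2 Subtype.val_injective <| Set.indicator_one_inj ℤ <|
      (hy B).coeff_eq_of_zero_eq hd (hy B')
        (fun _ _ => eq_of_zsmul_eq_indicator_sub_smul mem_T mem_T) h0
  have mk_set_T : #(Set T) = 𝔠 := by
    have := hc.to_subtype
    rw [mk_set, mk_eq_aleph0, two_power_aleph0]
  have := lift_mk_le_lift_mk_of_injective start_injective
  rw [mk_set_T, lift_continuum, continuum_le_lift] at this
  exact this.not_gt hH

end Recurrence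

section Group

variable {k : ℕ} {S : Type u} {Λ : Set (Fin (k + 1) → ℕ → S)}

theorem factorial_zsmul_yg_succ (a : ↥Λ → ℕ → ℤ) (η : ↥Λ) (n : ℕ) :
    (n.factorial : ℤ) • yg a η (n + 1) =
      yg a η n + a η n • zg a + ∑ m, xg a (resMem η m n) := by
  have hrel : QuotientAddGroup.mk' (relSub a) (relEl a η n) = 0 :=
    (QuotientAddGroup.eq_zero_iff _).2 (AddSubgroup.subset_closure ⟨η, n, rfl⟩)
  simp only [relEl, map_sub, map_sum, map_zsmul] at hrel
  rw [sub_sub, sub_sub, sub_eq_zero, ← add_assoc] at hrel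
  exact hrel

theorem solvesRecurrence_map_yg {H : Type v} [AddCommGroup H] {a : ↥Λ → ℕ → ℤ} (h : Gx a →+ H)
    (η : ↥Λ) :
    SolvesRecurrence (fun n => (n.factorial : ℤ)) (h (zg a))
      (fun n => ∑ m, h (xg a (resMem η m n))) (a η) (fun n => h (yg a η n)) := by
  intro n
  simpa only [map_add, map_sum, map_zsmul] using congrArg h (factorial_zsmul_yg_succ a η n)

end Group

theorem IsBlackBox.exists_prediction {k : ℕ} {S : Type u} {Λ : Set (Fin (k + 1) → ℕ → S)}
    {χ : Fin (k + 1) → Cardinal.{u}} {A : ↥Λ → Fin (k + 1) → ℕ → Ordinal.{u}}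
    (hbb : IsBlackBox Λ χ A) {C : Type v} [Nonempty C]
    (hC : ∀ m, lift.{u} #C ≤ lift.{v} (χ m)) :
    ∃ p : ↥Λ → Fin (k + 1) → ℕ → C, ∀ f : ↥(LambdaRes Λ) → C,
      ∃ η, ∀ m n, f (resMem η m n) = p η m n := by
  have exists_code (m : Fin (k + 1)) : Nonempty (C ↪ Set.Iio (χ m).ord) := by
    rw [← lift_mk_le', mk_Iio_ordinal, card_ord, lift_lift]
    simpa using lift_le.{u + 1}.2 (hC m)
  let code (m : Fin (k + 1)) : C ↪ Set.Iio (χ m).ord := (exists_code m).some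
  let codeOrd (m : Fin (k + 1)) (x : C) : Ordinal.{u} := code m x
  have codeOrd_injective (m) : Function.Injective (codeOrd m) :=
    Subtype.val_injective.comp (code m).injective
  refine ⟨fun η m n => Function.invFun (codeOrd m) (A η m n), fun f => ?_⟩
  let extendedF : Res k S → C := Function.extend Subtype.val f fun _ => Classical.arbitrary C
  obtain ⟨η, hη⟩ := hbb.2 (fun ν => codeOrd ν.m (extendedF ν)) <| by
    rintro m _ ⟨η, -, n, rfl⟩
    exact (code m _).2
  refine ⟨η, fun m n => ?_⟩
  calc f (resMem η m n) = extendedF (resMem η m n) := (Subtype.val_injective.extend_apply ..).symm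
    _ = Function.invFun (codeOrd m) (codeOrd m (extendedF (resMem η m n))) :=
        (Function.leftInverse_invFun (codeOrd_injective m) _).symm
    _ = Function.invFun (codeOrd m) (A η m n) := congrArg _ (hη m n)

theorem mk_prod_self_of_isAddTorsionFree (H : Type v) [AddCommGroup H] [IsAddTorsionFree H] :
    #(H × H) = #H := by
  cases subsingleton_or_nontrivial H
  · rw [mk_eq_one, mk_eq_one]
  · obtain ⟨c, hc⟩ := exists_ne (0 : H)
    have : Infinite H := .of_injective _ (smul_left_injective ℤ hc)
    simp

end Sh883

open Sh883 in
theorem stmt3_general {k : ℕ} {S : Type u} (Λ : Set (Fin (k + 1) → ℕ → S))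
    (χ : Fin (k + 1) → Cardinal.{u}) (A : ↥Λ → Fin (k + 1) → ℕ → Ordinal.{u})
    (hbb : IsBlackBox Λ χ A) (H : Type v) [AddCommGroup H] [IsAddTorsionFree H]
    (hH : HasTrivialUlmSubgroup H) (hHcard : #H < 𝔠)
    (hHχ : ∀ m, lift.{u} #H ≤ lift.{v} (χ m)) :
    ∃ a : ↥Λ → ℕ → ℤ, ∀ h : Gx a →+ H, h (zg a) = 0 := by
  choose! diag hdiag using fun (c : H) (hc : c ≠ 0) => exists_coeff_forall_not_solvesRecurrence
    hHcard (fun n => mod_cast n.factorial_ne_zero) (hH.infinite_setOf_factorial_zsmul_ne hc)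
  obtain ⟨p, hp⟩ := hbb.exists_prediction (C := H × H) <| by
    simpa only [mk_prod_self_of_isAddTorsionFree] using hHχ
  refine ⟨fun η => diag (p η 0 0).2 fun n => ∑ m, (p η m n).1, fun h => ?_⟩
  by_contra hz
  obtain ⟨η, hη⟩ := hp fun ν => (h (xg _ ν), h (zg _))
  have hsol := solvesRecurrence_map_yg h η
  simp only [← hη] at hsol
  exact hdiag _ hz _ _ hsol

open Sh883 in
/-- Let `(S, Λ)` be a combinatorial `k`-parameter admitting a
`(Λ, χ̄)`-black box where `χ_m = 2^{ℵ₀}` for every `m ≤ k`.  Then there is a function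
`a : Λ × ℕ → ℤ` such that in the group `G_x` for `x = (S, Λ, a)`, every homomorphism
`h : G_x → ℤ` kills the distinguished generator `z`. -/
theorem stmt3 {k : ℕ} {S : Type u} (Λ : Set (Fin (k + 1) → ℕ → S))
    (A : ↥Λ → Fin (k + 1) → ℕ → Ordinal.{u})
    (hbb : IsBlackBox Λ (fun _ => 2 ^ (ℵ₀ : Cardinal.{u})) A) :
    ∃ a : ↥Λ → ℕ → ℤ, ∀ h : Gx a →+ ℤ, h (zg a) = 0 := by
  exact stmt3_general Λ _ A hbb ℤ hasTrivialUlmSubgroup_int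
    (by simpa using aleph0_lt_continuum) fun _ => by simpa using (cantor ℵ₀).le
end

section
/- For every abelian-group k-parameter x, the group G_x is ℵ_1-free; that is, every countable subgroup of G_x is a free abelian group. -/
open Cardinal

/-!
Any two distinct tuples `η, η'` satisfy `η↾⟨0,n⟩ ≠ η'↾⟨0,n⟩` for all large `n`. Hence, for a
countable set `T` of tuples, there are thresholds `N η` such that the restrictions `η↾⟨0,n⟩` with
`η ∈ T` and `N η ≤ n` are pairwise distinct: at each `η` only its finitely many predecessors in an
enumeration of `T` have to be avoided. The relation indexed by such a pair `(η, n)` is solved for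
its own pivot `x_{η↾⟨0,n⟩}`, and the relations with `n < N η` are solved for `y_{η,n}`. What is
left, namely `z`, the `y_{η,n}` with `η ∈ T` and `N η ≤ n`, and the `x_ν` with `ν` not a pivot,
generates `z`, all `x_ν` and all `y_{η,n}` with `η ∈ T`. It is independent, because arbitrary
values for it in a divisible group extend to a homomorphism on the whole group: divisibility is what
provides values of `y_{η,n}` for `η ∉ T`. A countable subgroup involves only countably many tuples,
so it lies in a free group of this kind, and subgroups of free abelian groups are free.
-/

namespace Sh883

section FreeSubmodule

open Finsupp Set Submodule

variable {R ι : Type*} [CommRing R] [LinearOrder ι]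

theorem linearIndependent_of_mem_supported_Iic [NoZeroDivisors R] {s : Set ι} {v : s → ι →₀ R}
    (hsupp : ∀ i, v i ∈ supported R R (Iic i.1)) (hlead : ∀ i, v i i ≠ 0) :
    LinearIndependent R v := by
  rw [linearIndependent_iff]
  intro l hl
  by_contra hne
  let i := l.support.max' (support_nonempty_iff.2 hne)
  have hi : i ∈ l.support := Finset.max'_mem _ _
  have hlower : ∀ j ∈ l.support, j ≠ i → l j * v j i = 0 := fun j hj hji => by
    have hlt : j < i := lt_of_le_of_ne (Finset.le_max' _ _ hj) hji
    rw [(mem_supported' R _).1 (hsupp j) i hlt.not_ge, mul_zero]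
  have hcoeff : l i * v i i = 0 := calc
    l i * v i i = ∑ j ∈ l.support, l j * v j i :=
      (Finset.sum_eq_single_of_mem i hi hlower).symm
    _ = linearCombination R v l i := by
      simp [linearCombination_apply, Finsupp.sum, finsetSum_apply]
    _ = 0 := by rw [hl, Finsupp.zero_apply]
  exact mul_ne_zero (mem_support_iff.1 hi) (hlead i) hcoeff

/-- The ideal of coefficients at `i` of those elements of `N` whose coefficients beyond `i` vanish,
i.e. of the leading coefficients of elements of `N` with leading index `i`, together with `0`. -/
noncomputable def leadingIdeal (N : Submodule R (ι →₀ R)) (i : ι) : Ideal R :=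
  (N ⊓ supported R R (Iic i)).map (lapply i)

theorem support_max_lt {M : Type*} [Zero M] {x : ι →₀ M} {i : ι} (hx : ↑x.support ⊆ Iic i)
    (hxi : x i = 0) : x.support.max < i := by
  refine (Finset.sup_lt_iff (WithBot.bot_lt_coe i)).2 fun j hj => WithBot.coe_lt_coe.2 ?_
  refine lt_of_le_of_ne (hx hj) ?_
  rintro rfl
  exact mem_support_iff.1 hj hxi

theorem le_of_leadingIdeal_le [WellFoundedLT ι] {N N' : Submodule R (ι →₀ R)} (hle : N' ≤ N)
    (hlead : ∀ i, leadingIdeal N i ≤ leadingIdeal N' i) : N ≤ N' := by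
  intro x
  induction hm : x.support.max using WellFoundedLT.induction generalizing x with
  | ind m ih =>
    intro hx
    rcases x.support.eq_empty_or_nonempty with hzero | hne
    · rw [support_eq_empty.1 hzero]
      exact N'.zero_mem
    obtain ⟨i, hi⟩ := Finset.max_of_nonempty hne
    have hxi : x ∈ supported R R (Iic i) := fun j hj => Finset.le_max_of_eq hj hi
    obtain ⟨y, ⟨hyN', hyi⟩, hyx⟩ := hlead i (mem_map_of_mem ⟨hx, hxi⟩)
    have hlt : (x - y).support.max < m := by
      rw [← hm, hi]
      exact support_max_lt (sub_mem hxi hyi) (by simpa using sub_eq_zero.2 hyx.symm)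
    simpa using add_mem (ih _ hlt rfl (sub_mem hx (hle hyN'))) hyN'

variable [IsDomain R] [IsPrincipalIdealRing R]

theorem module_free_submodule_finsupp [WellFoundedLT ι] (N : Submodule R (ι →₀ R)) :
    Module.Free R N := by
  choose v hv hlead using fun i => IsPrincipal.generator_mem (leadingIdeal N i)
  let w : {i | leadingIdeal N i ≠ ⊥} → ι →₀ R := fun i => v i
  have hindep : LinearIndependent R w :=
    linearIndependent_of_mem_supported_Iic (fun i => (hv i).2) fun i h =>
      i.2 ((IsPrincipal.eq_bot_iff_generator_eq_zero _).2 ((hlead i).symm.trans h))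
  have hle : span R (range w) ≤ N := span_le.2 (range_subset_iff.2 fun i => (hv i).1)
  have hspan : span R (range w) = N := by
    refine hle.antisymm (le_of_leadingIdeal_le hle fun i => ?_)
    by_cases hi : leadingIdeal N i = ⊥
    · exact hi.trans_le bot_le
    · rw [← IsPrincipal.span_singleton_generator (leadingIdeal N i), span_singleton_le_iff_mem]
      exact ⟨v i, ⟨subset_span ⟨⟨i, hi⟩, rfl⟩, (hv i).2⟩, hlead i⟩
  exact hspan ▸ Module.Free.of_basis (Module.Basis.span hindep)

theorem module_free_of_injective {M M' : Type*} [AddCommGroup M] [Module R M] [AddCommGroup M']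
    [Module R M'] [Module.Free R M'] {f : M →ₗ[R] M'} (hf : Function.Injective f) :
    Module.Free R M := by
  obtain ⟨_, _⟩ := exists_wellFoundedLT (Module.Free.ChooseBasisIndex R M')
  let g := (Module.Free.chooseBasis R M').repr.toLinearMap ∘ₗ f
  have hg : Function.Injective g := (Module.Free.chooseBasis R M').repr.injective.comp hf
  have := module_free_submodule_finsupp (LinearMap.range g)
  exact Module.Free.of_equiv (LinearEquiv.ofInjective g hg).symm

end FreeSubmodule

theorem exists_countable_le_span_image {R M ι : Type*} [Semiring R] [AddCommMonoid M] [Module R M]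
    {v : ι → M} {H : Submodule R M} [Countable H] (hH : H ≤ Submodule.span R (Set.range v)) :
    ∃ s : Set ι, s.Countable ∧ H ≤ Submodule.span R (v '' s) := by
  have hcomb (h : H) : ∃ c : ι →₀ R, Finsupp.linearCombination R v c = h := by
    rw [← LinearMap.mem_range, Finsupp.range_linearCombination]
    exact hH h.2
  choose c hc using hcomb
  refine ⟨⋃ h, (c h).support, Set.countable_iUnion fun h => (c h).support.countable_toSet,
    fun x hx => (Finsupp.mem_span_image_iff_linearCombination R).2 ⟨c ⟨x, hx⟩, ?_, hc ⟨x, hx⟩⟩⟩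
  exact Set.subset_iUnion (fun h => ((c h).support : Set ι)) ⟨x, hx⟩

theorem exists_threshold_of_eventually_ne {α β : Type*} {T : Set α} (hT : T.Countable)
    {f : α → ℕ → β} (hf : ∀ x ∈ T, ∀ y ∈ T, x ≠ y → ∀ᶠ n in Filter.atTop, f x n ≠ f y n) :
    ∃ N : α → ℕ, ∀ x ∈ T, ∀ y ∈ T, ∀ n, N x ≤ n → N y ≤ n → f x n = f y n → x = y := by
  obtain ⟨rank, hrank⟩ := Set.countable_iff_exists_injOn.1 hT
  have havoid (x : α) : ∃ N, ∀ n ≥ N, x ∈ T → ∀ y ∈ {y ∈ T | rank y < rank x}, f x n ≠ f y n := by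
    refine Filter.eventually_atTop.1 (Filter.eventually_imp_distrib_left.2 fun hx => ?_)
    have hfin : {y ∈ T | rank y < rank x}.Finite :=
      .of_injOn (fun y hy => hy.2) (hrank.mono fun y hy => hy.1) (Set.finite_Iio (rank x))
    refine hfin.eventually_all.2 fun y hy => hf x hx y hy.1 ?_
    rintro rfl
    exact hy.2.false
  choose N hN using havoid
  refine ⟨N, fun x hx y hy n hxn hyn hxy => ?_⟩
  rcases lt_trichotomy (rank x) (rank y) with hlt | heq | hgt
  · exact absurd hxy.symm (hN y n hyn hy x ⟨hx, hlt⟩)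
  · exact hrank hx hy heq
  · exact absurd hxy (hN x n hxn hx y ⟨hy, hgt⟩)

section Recurrence

variable {V : Type*} [AddCommGroup V] {c : ℕ → ℤ} {r : ℕ → V}

theorem exists_recurrence_extending {e : ℕ → V} {N : ℕ}
    (he : ∀ n ≥ N, c n • e (n + 1) = e n + r n) :
    ∃ u : ℕ → V, (∀ n, c n • u (n + 1) = u n + r n) ∧ ∀ n ≥ N, u n = e n := by
  induction N generalizing e with
  | zero => exact ⟨e, fun n => he n n.zero_le, fun _ _ => rfl⟩
  | succ N ih =>
    let e' := Function.update e N (c N • e (N + 1) - r N)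
    have he' : ∀ n > N, e' n = e n := fun n hn => Function.update_of_ne hn.ne' _ _
    obtain ⟨u, hu, hue⟩ := @ih e' fun n hn => by
      rcases hn.eq_or_lt with rfl | hlt
      · simp [e']
      · rw [he' n hlt, he' (n + 1) (by omega), he n hlt]
    exact ⟨u, hu, fun n hn => (hue n (by omega)).trans (he' n hn)⟩

theorem exists_recurrence [DivisibleBy V ℤ] (hc : ∀ n, c n ≠ 0) (r : ℕ → V) :
    ∃ u : ℕ → V, ∀ n, c n • u (n + 1) = u n + r n :=
  ⟨fun n => n.rec 0 fun n v => DivisibleBy.div (v + r n) (c n),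
    fun n => DivisibleBy.div_cancel _ (hc n)⟩

theorem mem_of_recurrence {P : AddSubgroup V} {y : ℕ → V} {N : ℕ}
    (hrec : ∀ n, c n • y (n + 1) = y n + r n) (hr : ∀ n, r n ∈ P) (hy : ∀ n ≥ N, y n ∈ P) (n : ℕ) :
    y n ∈ P := by
  rcases le_total N n with hle | hle
  · exact hy n hle
  · refine Nat.decreasingInduction (fun i _ ih => ?_) (hy N le_rfl) hle
    rw [← sub_eq_of_eq_add (hrec i)]
    exact P.sub_mem (P.zsmul_mem ih _) (hr i)

end Recurrence

variable {k : ℕ} {S : Type u} {Λ : Set (Fin (k + 1) → ℕ → S)}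

theorem index_eq_of_resMem_eq {η η' : Λ} {m m' : Fin (k + 1)} {n n' : ℕ}
    (h : resMem η m n = resMem η' m' n') : m = m' ∧ n = n' := by
  have hres := congrArg Subtype.val h
  have hm := congrArg Res.m hres
  have hlength := congrArg (fun ν => ν.seq.length) hres
  simpa [resMem, restrictAt] using And.intro hm hlength

theorem apply_eq_of_resMem_eq {η η' : Λ} {m : Fin (k + 1)} {n : ℕ}
    (h : resMem η m n = resMem η' m n) (l : Fin (k + 1)) {j : ℕ} (hj : j < n) :
    η.1 l j = η'.1 l j := by
  have hres := congrArg Subtype.val h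
  simp only [resMem, restrictAt, Res.mk.injEq, heq_eq_eq, true_and] at hres
  obtain ⟨hseq, hrest⟩ := hres
  by_cases hl : l = m
  · subst hl
    exact congrFun (List.ofFn_injective hseq) ⟨j, hj⟩
  · exact congrFun (congrFun (congrFun hrest l) hl) j

theorem eventually_resMem_ne {η η' : Λ} (h : η ≠ η') (m : Fin (k + 1)) :
    ∀ᶠ n in Filter.atTop, resMem η m n ≠ resMem η' m n := by
  obtain ⟨l, j, hlj⟩ : ∃ l j, η.1 l j ≠ η'.1 l j := by
    simpa [Subtype.ext_iff, funext_iff] using h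
  filter_upwards [Filter.eventually_gt_atTop j] with n hj heq
  exact hlj (apply_eq_of_resMem_eq heq l hj)

theorem countable_setOf_exists_Y_mem {s : Set (Gen k S Λ)} (hs : s.Countable) :
    {η | ∃ n, Gen.Y η n ∈ s}.Countable := by
  have hY : Function.Injective (Function.uncurry (Gen.Y (Λ := Λ))) := by
    rintro ⟨η, n⟩ ⟨η', n'⟩ h
    cases h
    rfl
  refine ((hs.preimage hY).image Prod.fst).mono ?_
  rintro η ⟨n, hn⟩
  exact ⟨(η, n), hn, rfl⟩

section Relations

variable {V : Type*} [AddCommGroup V]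

/-- The values `val` of the generators in `V` satisfy the defining relations of `G_x`. -/
def SatisfiesRelations (a : Λ → ℕ → ℤ) (val : Gen k S Λ → V) : Prop :=
  ∀ η n, (n.factorial : ℤ) • val (.Y η (n + 1)) =
    val (.Y η n) + (a η n • val .Z + ∑ m, val (.X (resMem η m n)))

/-- The index `η↾⟨0,n⟩` of the generator for which the relation at `(η, n)` is solved. -/
def pivot (p : Λ × ℕ) : LambdaRes Λ :=
  resMem p.1 0 p.2

/-- The value of the generator `x_{η↾⟨0,n⟩}` that the relation at `(η, n)` dictates, given the
values `val` of the other generators. -/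
def pivotValue (a : Λ → ℕ → ℤ) (val : Gen k S Λ → V) (p : Λ × ℕ) : V :=
  (p.2.factorial : ℤ) • val (.Y p.1 (p.2 + 1)) - val (.Y p.1 p.2) - a p.1 p.2 • val .Z -
    ∑ m : Fin k, val (.X (resMem p.1 m.succ p.2))

theorem relation_iff_pivot_eq {a : Λ → ℕ → ℤ} {val : Gen k S Λ → V} {η : Λ} {n : ℕ} :
    (n.factorial : ℤ) • val (.Y η (n + 1)) =
        val (.Y η n) + (a η n • val .Z + ∑ m, val (.X (resMem η m n))) ↔
      val (.X (pivot (η, n))) = pivotValue a val (η, n) := by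
  rw [Fin.sum_univ_succ, pivotValue, pivot]
  grind

end Relations

namespace Gx

/-- The image in `G_x` of a generator. -/
def of (a : Λ → ℕ → ℤ) (g : Gen k S Λ) : Gx a :=
  QuotientAddGroup.mk (FreeAbelianGroup.of g)

theorem satisfiesRelations_of (a : Λ → ℕ → ℤ) : SatisfiesRelations a (of a) := by
  intro η n
  have hrel : QuotientAddGroup.mk' (relSub a) (relEl a η n) = 0 :=
    (QuotientAddGroup.eq_zero_iff _).2 (AddSubgroup.subset_closure ⟨η, n, rfl⟩)
  simp only [relEl, map_sub, map_zsmul, map_sum] at hrel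
  rw [← sub_eq_zero, ← hrel]
  simp only [of, QuotientAddGroup.mk'_apply]
  abel

theorem span_range_of (a : Λ → ℕ → ℤ) : Submodule.span ℤ (Set.range (of a)) = ⊤ := by
  refine Submodule.eq_top_iff'.2 fun x => ?_
  obtain ⟨x, rfl⟩ := QuotientAddGroup.mk_surjective x
  induction x using FreeAbelianGroup.induction_on with
  | zero => exact zero_mem _
  | of g => exact Submodule.subset_span ⟨g, rfl⟩
  | neg g ih => exact neg_mem ih
  | add x y ihx ihy => exact add_mem ihx ihy

theorem exists_linearMap_of_satisfiesRelations {V : Type*} [AddCommGroup V] {a : Λ → ℕ → ℤ}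
    {val : Gen k S Λ → V} (hval : SatisfiesRelations a val) :
    ∃ φ : Gx a →ₗ[ℤ] V, ∀ g, φ (of a g) = val g := by
  have hker : relSub a ≤ (FreeAbelianGroup.lift val).ker := by
    rw [relSub, AddSubgroup.closure_le]
    rintro _ ⟨η, n, rfl⟩
    change FreeAbelianGroup.lift val (relEl a η n) = 0
    simp only [relEl, map_sub, map_zsmul, map_sum, FreeAbelianGroup.lift_apply_of]
    rw [hval η n]
    abel
  exact ⟨(QuotientAddGroup.lift (relSub a) _ hker).toIntLinearMap, fun g => by simp [of]⟩

end Gx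

section BasicGenerators

variable {T : Set Λ} {N : Λ → ℕ}

/-- The pairs `(η, n)` with `η ∈ T` and `N η ≤ n`: those whose relation is solved for its pivot. -/
def tail (T : Set Λ) (N : Λ → ℕ) : Set (Λ × ℕ) :=
  {p | p.1 ∈ T ∧ N p.1 ≤ p.2}

/-- The generators that remain after the relations at the tuples in `T` have been used to eliminate
the pivots of `tail T N` and the `y_{η,n}` with `n < N η`. -/
def IsBasic (T : Set Λ) (N : Λ → ℕ) : Gen k S Λ → Prop
  | .X ν => ν ∉ pivot '' tail T N
  | .Y η n => (η, n) ∈ tail T N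
  | .Z => True

theorem isBasic_X_succ (η : Λ) (m : Fin k) (n : ℕ) : IsBasic T N (.X (resMem η m.succ n)) := by
  rintro ⟨p, -, hp⟩
  exact m.succ_ne_zero (index_eq_of_resMem_eq hp).1.symm

theorem exists_injOn_pivot_tail (hT : T.Countable) : ∃ N, Set.InjOn pivot (tail T N) := by
  obtain ⟨N, hN⟩ := exists_threshold_of_eventually_ne (f := fun η n => resMem η 0 n) hT
    fun η _ η' _ hne => eventually_resMem_ne hne 0
  refine ⟨N, ?_⟩
  rintro ⟨η, n⟩ ⟨hη, hn⟩ ⟨η', n'⟩ ⟨hη', hn'⟩ heq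
  obtain rfl : n = n' := (index_eq_of_resMem_eq heq).2
  rw [hN η hη η' hη' n hn hn' heq]

theorem exists_satisfiesRelations_eq_of_isBasic {V : Type*} [AddCommGroup V] [DivisibleBy V ℤ]
    (a : Λ → ℕ → ℤ) (hN : Set.InjOn pivot (tail T N)) (e : Gen k S Λ → V) :
    ∃ val, SatisfiesRelations a val ∧ ∀ g, IsBasic T N g → val g = e g := by
  let x : LambdaRes Λ → V :=
    Function.extend ((tail T N).domRestrict pivot) (fun p => pivotValue a e p) fun ν => e (.X ν)
  have hx_pivot : ∀ p ∈ tail T N, x (pivot p) = pivotValue a e p := fun p hp =>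
    hN.injective.extend_apply _ _ ⟨p, hp⟩
  have hx_basic : ∀ ν, IsBasic T N (.X ν) → x ν = e (.X ν) := fun ν hν =>
    Function.extend_apply' _ _ _ fun ⟨p, hp⟩ => hν ⟨p, p.2, hp⟩
  have hy (η : Λ) : ∃ y : ℕ → V,
      (∀ n, (n.factorial : ℤ) • y (n + 1) = y n + (a η n • e .Z + ∑ m, x (resMem η m n))) ∧
        ∀ n, (η, n) ∈ tail T N → y n = e (.Y η n) := by
    by_cases hη : η ∈ T
    · obtain ⟨y, hy, hye⟩ := exists_recurrence_extending (e := fun n => e (.Y η n)) (N := N η)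
        (c := fun n => n.factorial) (r := fun n => a η n • e .Z + ∑ m, x (resMem η m n))
        fun n hn => by
          rw [Fin.sum_univ_succ, show resMem η 0 n = pivot (η, n) from rfl,
            hx_pivot (η, n) ⟨hη, hn⟩]
          simp only [hx_basic _ (isBasic_X_succ η _ n), pivotValue]
          abel
      exact ⟨y, hy, fun n hn => hye n hn.2⟩
    · obtain ⟨y, hy⟩ := exists_recurrence (c := fun n => n.factorial)
        (fun n => Int.natCast_ne_zero.2 n.factorial_ne_zero)
        fun n => a η n • e .Z + ∑ m, x (resMem η m n)
      exact ⟨y, hy, fun n hn => absurd hn.1 hη⟩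
  choose y hy hye using hy
  refine ⟨fun | .X ν => x ν | .Y η n => y η n | .Z => e .Z, hy, ?_⟩
  rintro (ν | ⟨η, n⟩ | _) hg
  exacts [hx_basic ν hg, hye η n hg, rfl]

theorem linearIndepOn_isBasic (a : Λ → ℕ → ℤ) (hN : Set.InjOn pivot (tail T N)) :
    LinearIndepOn ℤ (Gx.of a) {g | IsBasic T N g} := by
  classical
  let e : Gen k S Λ → Gen k S Λ → ℚ := fun g => Pi.single g 1
  have he : LinearIndependent ℤ e :=
    (Pi.linearIndependent_single_one (Gen k S Λ) ℚ).restrict_scalars' ℤ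
  obtain ⟨val, hval, hbasic⟩ := exists_satisfiesRelations_eq_of_isBasic a hN e
  obtain ⟨φ, hφ⟩ := Gx.exists_linearMap_of_satisfiesRelations hval
  have hφe : Set.EqOn e (φ ∘ Gx.of a) {g | IsBasic T N g} := fun g hg =>
    ((hφ g).trans (hbasic g hg)).symm
  exact .of_comp φ ((linearIndepOn_congr hφe).1 (he.linearIndepOn _))

theorem module_free_span_isBasic (a : Λ → ℕ → ℤ) (hN : Set.InjOn pivot (tail T N)) :
    Module.Free ℤ (Submodule.span ℤ (Gx.of a '' {g | IsBasic T N g})) := by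
  rw [Set.image_eq_range]
  exact .of_basis (.span (linearIndepOn_isBasic a hN))

theorem of_mem_span_isBasic (a : Λ → ℕ → ℤ) {g : Gen k S Λ} (hg : ∀ η n, g = .Y η n → η ∈ T) :
    Gx.of a g ∈ Submodule.span ℤ (Gx.of a '' {g | IsBasic T N g}) := by
  set P := Submodule.span ℤ (Gx.of a '' {g | IsBasic T N g})
  have hP {g} (h : IsBasic T N g) : Gx.of a g ∈ P := Submodule.subset_span ⟨g, h, rfl⟩
  have hZ : Gx.of a .Z ∈ P := hP trivial
  have hX (ν) : Gx.of a (.X ν) ∈ P := by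
    by_cases hν : ν ∈ pivot '' tail T N
    · obtain ⟨⟨η, n⟩, ⟨hη, hn⟩, rfl⟩ := hν
      rw [relation_iff_pivot_eq.1 (Gx.satisfiesRelations_of a η n)]
      have hY : Gx.of a (.Y η n) ∈ P := hP ⟨hη, hn⟩
      have hY' : Gx.of a (.Y η (n + 1)) ∈ P := hP ⟨hη, Nat.le_succ_of_le hn⟩
      exact sub_mem (sub_mem (sub_mem (zsmul_mem hY' _) hY) (zsmul_mem hZ _))
        (sum_mem fun m _ => hP (isBasic_X_succ η m n))
    · exact hP hν
  match g with
  | .X ν => exact hX ν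
  | .Z => exact hZ
  | .Y η n =>
    refine mem_of_recurrence (P := P.toAddSubgroup) (N := N η) (Gx.satisfiesRelations_of a η)
      (fun n => ?_) (fun n hn => hP (g := .Y η n) ⟨hg η _ rfl, hn⟩) n
    exact add_mem (zsmul_mem hZ _) (sum_mem fun m _ => hX _)

end BasicGenerators

end Sh883

open Sh883 in
/-- For every abelian-group `k`-parameter `x`, the group `G_x` is
`ℵ₁`-free: every subgroup of cardinality less than `ℵ₁` (i.e. every countable subgroup)
is a free abelian group. -/
theorem stmt4 {k : ℕ} {S : Type u} (Λ : Set (Fin (k + 1) → ℕ → S)) (a : ↥Λ → ℕ → ℤ) :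
    ∀ H : AddSubgroup (Gx a), #H < Cardinal.aleph 1 → Module.Free ℤ H := by
  intro H hH
  have : Countable H.toIntSubmodule :=
    Cardinal.mk_le_aleph0_iff.1 (Cardinal.lt_aleph_one_iff.1 hH)
  obtain ⟨s, hs, hHs⟩ := exists_countable_le_span_image (v := Gx.of a) (H := H.toIntSubmodule)
    (le_top.trans (Gx.span_range_of a).ge)
  let T : Set Λ := {η | ∃ n, Gen.Y η n ∈ s}
  obtain ⟨N, hN⟩ := exists_injOn_pivot_tail (T := T) (countable_setOf_exists_Y_mem hs)
  have hfree := module_free_span_isBasic a hN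
  have hle : H.toIntSubmodule ≤ Submodule.span ℤ (Gx.of a '' {g | IsBasic T N g}) :=
    hHs.trans <| Submodule.span_le.2 <| Set.image_subset_iff.2 fun g hg =>
      of_mem_span_isBasic a fun η n hgY => ⟨n, hgY ▸ hg⟩
  exact module_free_of_injective (Submodule.inclusion_injective hle)
end
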